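/- Assume the standing assumptions (B) and fix α ∈ C(Ω̄;𝕊ⁿ(θ₀)). For any r ∈ (0, r₀) there exist a function v_r ∈ C²(Ω̄) and a constant η ∈ (0,1) such that: H_α(x, Dv_r(x)) ≤ −η for all x ∈ Ω \ B_r; H_α(x, Dv_r(x)) ≤ 1 for all x ∈ B_r; and ‖v_r − V_α‖_{L^∞(Ω)} < r. -/

import Mathlib

open Set Filter Metric Topology
open scoped ENNReal

noncomputable section

/-- `n`-dimensional Euclidean space. -/
abbrev Eu (n : ℕ) := EuclideanSpace ℝ (Fin n)

variable {n : ℕ}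

/-- Euclidean dot product. -/
def dotp (x y : Eu n) : ℝ := ∑ i, x i * y i

/-- The quadratic form `A p · p` of a matrix `A`. -/
def mquad (A : Matrix (Fin n) (Fin n) ℝ) (p : Eu n) : ℝ := ∑ i, ∑ j, A i j * p i * p j

/-- `A ∈ 𝕊ⁿ(θ)`: symmetric with `θ I ≤ A ≤ θ⁻¹ I`. -/
def memS (θ : ℝ) (A : Matrix (Fin n) (Fin n) ℝ) : Prop :=
  A.IsSymm ∧ ∀ p : Eu n, θ * ‖p‖ ^ 2 ≤ mquad A p ∧ mquad A p ≤ θ⁻¹ * ‖p‖ ^ 2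

/-- order of symmetric matrices (via quadratic forms). -/
def mle (A B : Matrix (Fin n) (Fin n) ℝ) : Prop := ∀ p : Eu n, mquad A p ≤ mquad B p

/-- trace of the product `A·H`. -/
def trMul (A H : Matrix (Fin n) (Fin n) ℝ) : ℝ := ∑ i, ∑ j, A i j * H j i

/-- the Pucci maximal operator associated with `𝕊ⁿ(θ)`. -/
def pucci (θ : ℝ) (X : Matrix (Fin n) (Fin n) ℝ) : ℝ :=
  sSup ((fun A => trMul A X) '' {A | memS θ A})

/-- time derivative of `u(x,t)`. -/
def tD (u : Eu n → ℝ → ℝ) (x : Eu n) (t : ℝ) : ℝ := deriv (u x) t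

/-- spatial gradient of `u(x,t)`. -/
def sG (u : Eu n → ℝ → ℝ) (x : Eu n) (t : ℝ) : Eu n := gradient (fun y => u y t) x

/-- spatial Hessian matrix of `u(x,t)`. -/
def sH (u : Eu n → ℝ → ℝ) (x : Eu n) (t : ℝ) : Matrix (Fin n) (Fin n) ℝ :=
  fun i j => fderiv ℝ (fun y => sG u y t i) x (EuclideanSpace.single j 1)

/-- Hessian matrix of a static function. -/
def hessS (v : Eu n → ℝ) (x : Eu n) : Matrix (Fin n) (Fin n) ℝ :=
  fun i j => fderiv ℝ (fun y => gradient v y i) x (EuclideanSpace.single j 1)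

/-- closed parabolic cylinder `Q̄_T = closure Ω × [0,T]` (with `T ∈ (0,∞]`). -/
def cylC (Ω : Set (Eu n)) (T : ℝ≥0∞) : Set (Eu n × ℝ) :=
  {p | p.1 ∈ closure Ω ∧ 0 ≤ p.2 ∧ ENNReal.ofReal p.2 ≤ T}

/-- open parabolic cylinder `Q_T = Ω × (0,T)`. -/
def cylO (Ω : Set (Eu n)) (T : ℝ≥0∞) : Set (Eu n × ℝ) :=
  {p | p.1 ∈ Ω ∧ 0 < p.2 ∧ ENNReal.ofReal p.2 < T}

/-- `u ∈ C^{2,1}(Q_T)`. -/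
def C21 (u : Eu n → ℝ → ℝ) (Ω : Set (Eu n)) (T : ℝ≥0∞) : Prop :=
  (∀ x ∈ Ω, ∀ t : ℝ, 0 < t → ENNReal.ofReal t < T →
     ContDiffAt ℝ 2 (fun y => u y t) x ∧ DifferentiableAt ℝ (u x) t) ∧
  ContinuousOn (fun p : Eu n × ℝ => tD u p.1 p.2) (cylO Ω T) ∧
  ContinuousOn (fun p : Eu n × ℝ => sH u p.1 p.2) (cylO Ω T)

/-- `u ∈ C(Q̄_T) ∩ C^{2,1}(Q_T)`. -/
def Classical21 (u : Eu n → ℝ → ℝ) (Ω : Set (Eu n)) (T : ℝ≥0∞) : Prop :=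
  ContinuousOn (fun p : Eu n × ℝ => u p.1 p.2) (cylC Ω T) ∧ C21 u Ω T

/-- a coefficient field in `C(Q̄_T; 𝕊ⁿ(θ))`. -/
def MatC (θ : ℝ) (A : Eu n → ℝ → Matrix (Fin n) (Fin n) ℝ) (Ω : Set (Eu n))
    (T : ℝ≥0∞) : Prop :=
  ContinuousOn (fun p : Eu n × ℝ => A p.1 p.2) (cylC Ω T) ∧
  ∀ p ∈ cylC Ω T, memS θ (A p.1 p.2)

/-- `u` is a classical solution of `u_t = ε tr[A D²u] + b·Du` in `Q_T`. -/
def SolveL (ε : ℝ) (A : Eu n → ℝ → Matrix (Fin n) (Fin n) ℝ) (b : Eu n → Eu n)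
    (u : Eu n → ℝ → ℝ) (Ω : Set (Eu n)) (T : ℝ≥0∞) : Prop :=
  ∀ x ∈ Ω, ∀ t : ℝ, 0 < t → ENNReal.ofReal t < T →
    tD u x t = ε * trMul (A x t) (sH u x t) + dotp (b x) (sG u x t)

/-- `u` is a classical subsolution of `(L)` in `Q_T`. -/
def SubsolL (ε : ℝ) (A : Eu n → ℝ → Matrix (Fin n) (Fin n) ℝ) (b : Eu n → Eu n)
    (u : Eu n → ℝ → ℝ) (Ω : Set (Eu n)) (T : ℝ≥0∞) : Prop :=
  ∀ x ∈ Ω, ∀ t : ℝ, 0 < t → ENNReal.ofReal t < T →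
    tD u x t ≤ ε * trMul (A x t) (sH u x t) + dotp (b x) (sG u x t)

/-- `u` is a classical supersolution of `(L)` in `Q_T`. -/
def SupersolL (ε : ℝ) (A : Eu n → ℝ → Matrix (Fin n) (Fin n) ℝ) (b : Eu n → Eu n)
    (u : Eu n → ℝ → ℝ) (Ω : Set (Eu n)) (T : ℝ≥0∞) : Prop :=
  ∀ x ∈ Ω, ∀ t : ℝ, 0 < t → ENNReal.ofReal t < T →
    ε * trMul (A x t) (sH u x t) + dotp (b x) (sG u x t) ≤ tD u x t

/-- viscosity subsolution of `H(x,Du) = 0` on `A`. -/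
def ViscSub (H : Eu n → Eu n → ℝ) (A : Set (Eu n)) (u : Eu n → ℝ) : Prop :=
  ∀ φ : Eu n → ℝ, ContDiff ℝ 1 φ → ∀ x ∈ A,
    IsLocalMaxOn (fun y => u y - φ y) A x → H x (gradient φ x) ≤ 0

/-- viscosity supersolution of `H(x,Du) = 0` on `A`. -/
def ViscSup (H : Eu n → Eu n → ℝ) (A : Set (Eu n)) (u : Eu n → ℝ) : Prop :=
  ∀ φ : Eu n → ℝ, ContDiff ℝ 1 φ → ∀ x ∈ A,
    IsLocalMinOn (fun y => u y - φ y) A x → 0 ≤ H x (gradient φ x)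

/-- the Hamiltonian `H_α(x,p) = α(x) p·p + b(x)·p`. -/
def Ham (α : Eu n → Matrix (Fin n) (Fin n) ℝ) (b : Eu n → Eu n) (x p : Eu n) : ℝ :=
  mquad (α x) p + dotp (b x) p

/-- the quasi-potential `V_α`: the pointwise supremum (= maximal element) of all
Lipschitz viscosity subsolutions of `H_α(x,Du)=0` in `Ω` vanishing at the origin. -/
def Vq (α : Eu n → Matrix (Fin n) (Fin n) ℝ) (b : Eu n → Eu n) (Ω : Set (Eu n))
    (x : Eu n) : ℝ :=
  sSup {r | ∃ u : Eu n → ℝ, (∃ K : NNReal, LipschitzOnWith K u (closure Ω)) ∧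
    u 0 = 0 ∧ ViscSub (Ham α b) Ω u ∧ r = u x}

/-- `M_α = min_{∂Ω} V_α`. -/
def Mq (α : Eu n → Matrix (Fin n) (Fin n) ℝ) (b : Eu n → Eu n) (Ω : Set (Eu n)) : ℝ :=
  sInf (Vq α b Ω '' frontier Ω)

/-- `argmin (V_α | ∂Ω)`. -/
def argminV (α : Eu n → Matrix (Fin n) (Fin n) ℝ) (b : Eu n → Eu n)
    (Ω : Set (Eu n)) : Set (Eu n) :=
  {x ∈ frontier Ω | ∀ y ∈ frontier Ω, Vq α b Ω x ≤ Vq α b Ω y}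

/-- `Σ_α^m = {x ∈ Ω̄ : V_α(x) ≤ m}`. -/
def SigmaM (α : Eu n → Matrix (Fin n) (Fin n) ℝ) (b : Eu n → Eu n) (Ω : Set (Eu n))
    (m : ℝ) : Set (Eu n) :=
  {x ∈ closure Ω | Vq α b Ω x ≤ m}

/-- `Ω` is a bounded `C¹` domain with outward unit normal `ν`. -/
def IsBdC1With (Ω : Set (Eu n)) (ν : Eu n → Eu n) : Prop :=
  IsOpen Ω ∧ Bornology.IsBounded Ω ∧
  ∃ ρ : Eu n → ℝ, ContDiff ℝ 1 ρ ∧ Ω = {x | ρ x < 0} ∧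
    ∀ x ∈ frontier Ω, gradient ρ x ≠ 0 ∧ ν x = ‖gradient ρ x‖⁻¹ • gradient ρ x

/-- `X` is the flow of `b`, and the origin is globally asymptotically stable. -/
def GAS (b : Eu n → Eu n) (X : ℝ → Eu n → Eu n) : Prop :=
  (∀ x, X 0 x = x) ∧ (∀ x t, HasDerivAt (fun s => X s x) (b (X t x)) t) ∧
  (∀ x, Tendsto (fun t => X t x) atTop (nhds 0)) ∧
  (∀ ε > (0:ℝ), ∃ δ > (0:ℝ), ∀ x : Eu n, ‖x‖ < δ → ∀ t ≥ (0:ℝ), ‖X t x‖ < ε)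

/-- `Ω_δ = {x ∈ Ω : dist(x,∂Ω) > δ}`. -/
def Omd (Ω : Set (Eu n)) (δ : ℝ) : Set (Eu n) := {x ∈ Ω | δ < infDist x (frontier Ω)}

/-- `Ω^Π_δ = {x ∈ Ω̄ : dist(x, ∂Ω \ Π) > δ}`. -/
def OmPid (Ω Pset : Set (Eu n)) (δ : ℝ) : Set (Eu n) :=
  {x ∈ closure Ω | δ < infDist x (frontier Ω \ Pset)}

/-- the standing assumptions (B). -/
structure SettingB (n : ℕ) where
  Ω : Set (Eu n)
  ν : Eu n → Eu n
  g : Eu n → ℝ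
  θ₀ : ℝ
  a : Eu n → ℝ → Matrix (Fin n) (Fin n) ℝ
  b : Eu n → Eu n
  b₀ : ℝ
  r₀ : ℝ
  θ₀_mem : θ₀ ∈ Set.Ioc (0 : ℝ) 1
  domain : IsBdC1With Ω ν
  zero_mem : (0 : Eu n) ∈ Ω
  g_cont : ContinuousOn g (closure Ω)
  a_cont : ContinuousOn (fun p : Eu n × ℝ => a p.1 p.2) (closure Ω ×ˢ Set.univ)
  a_mem : ∀ x ∈ closure Ω, ∀ c : ℝ, memS θ₀ (a x c)
  b_lip : ∃ K : NNReal, LipschitzWith K b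
  b_zero : b 0 = 0
  b_gas : ∃ X : ℝ → Eu n → Eu n, GAS b X
  b_inward : ∀ x ∈ frontier Ω, dotp (b x) (ν x) < 0
  b₀_pos : 0 < b₀
  r₀_pos : 0 < r₀
  ball_sub : closedBall (0 : Eu n) r₀ ⊆ Ω
  b_coerc : ∀ x ∈ ball (0 : Eu n) r₀, dotp (b x) x ≤ -b₀ * ‖x‖ ^ 2

namespace SettingB

variable (S : SettingB n)

/-- the quasi-potential `V^c` associated with `(a(·,c), b)`. -/
def Vc (c : ℝ) : Eu n → ℝ := Vq (fun x => S.a x c) S.b S.Ω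

/-- `M(c) = min_{∂Ω} V^c`. -/
def M (c : ℝ) : ℝ := sInf (S.Vc c '' frontier S.Ω)

/-- `G(c) = {g(x) : x ∈ argmin(V^c|∂Ω)}`. -/
def Gset (c : ℝ) : Set ℝ := S.g '' argminV (fun x => S.a x c) S.b S.Ω

/-- `G⁺(c) = max G(c)`. -/
def Gp (c : ℝ) : ℝ := sSup (S.Gset c)

/-- `G⁻(c) = min G(c)`. -/
def Gm (c : ℝ) : ℝ := sInf (S.Gset c)

/-- `c₀ = g(0)`. -/
def c0 : ℝ := S.g 0

/-- `g_min = min_{Ω̄} g`. -/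
def gmin : ℝ := sInf (S.g '' closure S.Ω)

/-- `g_max = max_{Ω̄} g`. -/
def gmax : ℝ := sSup (S.g '' closure S.Ω)

/-- the crossing value `c₁`. -/
def c1 : ℝ :=
  if S.c0 ≤ S.Gp S.c0 then sInf {c | S.c0 ≤ c ∧ S.Gm c ≤ c}
  else sSup {c | c ≤ S.c0 ∧ c ≤ S.Gp c}

/-- the function `c̄ : (0,∞) → I_g`. -/
def cbar (l : ℝ) : ℝ :=
  if l < S.M S.c0 ∨ S.c1 = S.c0 then S.c0
  else if S.c0 < S.c1 then min S.c1 (sInf {c | c ∈ Set.Icc S.c0 S.c1 ∧ S.M c = l})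
  else max S.c1 (sSup {c | c ∈ Set.Icc S.c1 S.c0 ∧ S.M c = l})

/-- assumption (FK13): `G⁺(c₀) = G⁻(c₀)`. -/
def FK13 : Prop := S.Gp S.c0 = S.Gm S.c0

/-- assumption (FK12). -/
def FK12 : Prop :=
  ∀ δ₀ > (0:ℝ), ∃ δ ∈ Set.Ioc (0:ℝ) δ₀,
    (S.c1 ≤ S.c0 ∧ S.gmin < S.c1 → S.c1 - δ < S.Gm (S.c1 - δ)) ∧
    (S.c0 ≤ S.c1 ∧ S.c1 < S.gmax → S.Gp (S.c1 + δ) < S.c1 + δ)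

/-- `u` is a classical (`C(Q̄) ∩ C^{2,1}(Q)`) solution of the quasi-linear equation (QL). -/
def SolvesQL (ε : ℝ) (u : Eu n → ℝ → ℝ) : Prop :=
  Classical21 u S.Ω ⊤ ∧ SolveL ε (fun x t => S.a x (u x t)) S.b u S.Ω ⊤

/-- the boundary condition (BC): `u = g` on the parabolic boundary of `Q`. -/
def BC (u : Eu n → ℝ → ℝ) : Prop :=
  (∀ x ∈ closure S.Ω, u x 0 = S.g x) ∧ ∀ x ∈ frontier S.Ω, ∀ t > (0:ℝ), u x t = S.g x

end SettingB

/-!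
Write `H = H_α`. By Legendre duality `H(x, p) ≤ c` means `p · D_pH(x, q) ≤ α(x)q · q + c` for all
`q`, so for a Lipschitz function `w` the inequality `H(x, Dw) ≤ c` can be read as an upper bound on
the difference quotients of `w` along bounded directions. Such bounds pass to convex
combinations and to mollifications, and they follow from the viscosity inequality.

The subsolutions competing for `V_α` are equicontinuous up to the boundary, because the flow `X_t`
of `b` carries `closure Ω` into `Ω`; they are closed under maxima, so one of them, say `u`, is
uniformly close to `V_α`. For small `t` the function `u ∘ X_t` is a dual subsolution up to a small
error on a neighbourhood of all of `closure Ω`. To make it strict away from the origin, it is mixed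
with a small multiple of `∫₀ᵀ max(0, |X_s x| - r/2) ds`, which decreases along `b` at a definite
rate outside `B_r`, since by time `T` every trajectory has entered `B_{r/2}`. The mollification of
the convex combination is `v_r`.
-/

section Slopes

open MeasureTheory ContinuousLinearMap
open scoped Convolution ContDiff NNReal

variable {E : Type*} [NormedAddCommGroup E] [NormedSpace ℝ E]
  {f g w : E → ℝ} {s t : Set E} {e e' x : E} {m m' : ℝ}

/-- The forward difference quotients of `w` in the direction `e` are eventually at most `m`,
uniformly over base points in `s`. Unlike a pointwise derivative bound, this survives averaging of
`w` over translates. -/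
def SlopeLE (w : E → ℝ) (s : Set E) (e : E) (m : ℝ) : Prop :=
  ∀ᶠ h in 𝓝[>] (0 : ℝ), ∀ y ∈ s, w (y + h • e) ≤ w y + h * m

lemma SlopeLE.mono_set (hw : SlopeLE w t e m) (hst : s ⊆ t) : SlopeLE w s e m :=
  hw.mono fun _ hh y hy => hh y (hst hy)

lemma SlopeLE.mono (hw : SlopeLE w s e m) (hm : m ≤ m') : SlopeLE w s e m' := by
  filter_upwards [hw, self_mem_nhdsWithin] with h hh (h_pos : 0 < h) y hy
  exact (hh y hy).trans (by gcongr)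

lemma SlopeLE.add (hf : SlopeLE f s e m) (hg : SlopeLE g s e m') :
    SlopeLE (fun y => f y + g y) s e (m + m') := by
  filter_upwards [hf, hg] with h hfh hgh y hy
  linarith [hfh y hy, hgh y hy]

lemma SlopeLE.const_mul {c : ℝ} (hw : SlopeLE w s e m) (hc : 0 ≤ c) :
    SlopeLE (fun y => c * w y) s e (c * m) := by
  filter_upwards [hw] with h hh y hy
  linarith [mul_le_mul_of_nonneg_left (hh y hy) hc]

lemma SlopeLE.change_direction {L : ℝ≥0} (hw : SlopeLE w s e m) (hL : LipschitzWith L w) :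
    SlopeLE w s e' (m + L * ‖e' - e‖) := by
  filter_upwards [hw, self_mem_nhdsWithin] with h hh (h_pos : 0 < h) y hy
  have hdist : w (y + h • e') - w (y + h • e) ≤ L * (h * ‖e' - e‖) := by
    simpa [dist_eq_norm, ← smul_sub, norm_smul, abs_of_pos h_pos] using
      (le_abs_self _).trans (hL.dist_le_mul (y + h • e') (y + h • e))
  linarith [hh y hy]

lemma slopeLE_of_lipschitzWith {L : ℝ≥0} (hL : LipschitzWith L w) : SlopeLE w s e (L * ‖e‖) := by
  have hzero : SlopeLE w s 0 0 := by simp [SlopeLE]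
  simpa using hzero.change_direction (e' := e) hL

lemma SlopeLE.fderiv_le (hw : SlopeLE w {x} e m) (hd : DifferentiableAt ℝ w x) :
    fderiv ℝ w x e ≤ m := by
  have hderiv : HasDerivWithinAt (fun h : ℝ => w (x + h • e)) (fderiv ℝ w x e) (Ioi 0) 0 :=
    (hd.hasFDerivAt.hasLineDerivAt e).hasDerivWithinAt
  rw [hasDerivWithinAt_iff_tendsto_slope' self_notMem_Ioi] at hderiv
  refine le_of_tendsto hderiv ?_
  filter_upwards [hw, self_mem_nhdsWithin] with h hh (h_pos : 0 < h)
  rw [slope_def_field, zero_smul, add_zero, sub_zero, div_le_iff₀ h_pos]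
  linarith [hh x rfl]

variable [FiniteDimensional ℝ E] [MeasurableSpace E] [BorelSpace E] [HasContDiffBump E]

lemma SlopeLE.convolution {μ : Measure E} [μ.IsAddHaarMeasure] (φ : ContDiffBump (0 : E))
    (hc : Continuous w) (hw : SlopeLE w (closedBall x φ.rOut) e m) :
    SlopeLE (φ.normed μ ⋆[lsmul ℝ ℝ, μ] w) {x} e m := by
  filter_upwards [hw] with h hh
  intro y hy
  rw [mem_singleton_iff.1 hy]
  have hint (y : E) : Integrable (fun t => φ.normed μ t * w (y - t)) μ :=
    (φ.continuous_normed.mul (by fun_prop)).integrable_of_hasCompactSupport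
      φ.hasCompactSupport_normed.mul_right
  have hpointwise (t : E) : φ.normed μ t * w (x + h • e - t) ≤
      φ.normed μ t * w (x - t) + φ.normed μ t * (h * m) := by
    by_cases ht : t ∈ ball (0 : E) φ.rOut
    · rw [← mul_add, add_sub_right_comm]
      refine mul_le_mul_of_nonneg_left (hh (x - t) ?_) (φ.nonneg_normed t)
      simpa using (mem_ball_zero_iff.1 ht).le
    · rw [← φ.support_normed_eq (μ := μ), Function.notMem_support] at ht
      simp [ht]
  calc (φ.normed μ ⋆[lsmul ℝ ℝ, μ] w) (x + h • e)
      ≤ ∫ t, (φ.normed μ t * w (x - t) + φ.normed μ t * (h * m)) ∂μ :=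
        integral_mono (hint _) ((hint x).add (φ.integrable_normed.mul_const _)) hpointwise
    _ = (φ.normed μ ⋆[lsmul ℝ ℝ, μ] w) x + h * m := by
        rw [integral_add (hint x) (φ.integrable_normed.mul_const _), integral_mul_const,
          φ.integral_normed, one_mul]
        rfl

lemma exists_contDiff_fderiv_le_of_lipschitzWith {L : ℝ≥0} (hL : LipschitzWith L w) {ε : ℝ}
    (hε : 0 < ε) :
    ∃ v : E → ℝ, ContDiff ℝ ∞ v ∧ (∀ x, |v x - w x| ≤ L * ε) ∧
      ∀ x e m, SlopeLE w (closedBall x ε) e m → fderiv ℝ v x e ≤ m := by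
  let φ : ContDiffBump (0 : E) := ⟨ε / 2, ε, half_pos hε, half_lt_self hε⟩
  let μ : Measure E := Measure.addHaar
  have hsmooth : ContDiff ℝ ∞ (φ.normed μ ⋆[lsmul ℝ ℝ, μ] w) :=
    φ.hasCompactSupport_normed.contDiff_convolution_left _ φ.contDiff_normed
      hL.continuous.locallyIntegrable
  refine ⟨_, hsmooth, fun x => ?_, fun x e m hw => ?_⟩
  · refine φ.dist_normed_convolution_le hL.continuous.aestronglyMeasurable fun y hy => ?_
    exact (hL.dist_le_mul y x).trans (by gcongr; exact (mem_ball.1 hy).le)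
  · exact (hw.convolution φ hL.continuous).fderiv_le
      (hsmooth.differentiable (by simp)).differentiableAt

end Slopes

section ViscosityCurves

lemma exists_isMaxOn_sub_mul {X : Type*} [TopologicalSpace X] {S : Set X} (hS : IsCompact S)
    {f g : X → ℝ} (hf : ContinuousOn f S) (hg : ContinuousOn g S) (hg_nonneg : ∀ x ∈ S, 0 ≤ g x)
    {x₀ : X} (hx₀ : x₀ ∈ S) (hgx₀ : g x₀ = 0) {d : ℝ} (hd : 0 < d) :
    ∃ N : ℝ, ∃ x ∈ S, IsMaxOn (fun y => f y - N * g y) S x ∧ g x < d ∧ f x₀ ≤ f x := by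
  obtain ⟨M, hM⟩ := hS.bddAbove_image hf
  have hM (x) (hx : x ∈ S) : f x ≤ M := hM (mem_image_of_mem f hx)
  -- At a maximum the penalty `N * g` is at most `M - f x₀`, so this `N` forces `g < d` there.
  obtain ⟨N, hN, hNd⟩ : ∃ N > 0, M - f x₀ < N * d := by
    have hMx₀ := hM x₀ hx₀
    exact ⟨(M - f x₀ + 1) / d, by positivity, by field_simp; linarith⟩
  obtain ⟨x, hx, hmax⟩ := hS.exists_isMaxOn ⟨x₀, hx₀⟩ (hf.sub (continuousOn_const.mul hg))
  have hval : f x₀ ≤ f x - N * g x := by simpa [hgx₀] using hmax hx₀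
  refine ⟨N, x, hx, hmax, lt_of_mul_lt_mul_left (by linarith [hM x hx]) hN.le, ?_⟩
  exact hval.trans (sub_le_self _ (mul_nonneg hN.le (hg_nonneg x hx)))

lemma exists_penalized_isLocalMax {ι E : Type*} [TopologicalSpace ι] [NormedAddCommGroup E]
    [ProperSpace E] {u : E → ℝ} {U : Set E} (hU : IsOpen U) (hu : ContinuousOn u U)
    {I : Set ι} (hI : IsCompact I) {γ : ι → E} (hγ : ContinuousOn γ I) (hγU : MapsTo γ I U)
    {k : ι → ℝ} (hk : ContinuousOn k I) {d : ℝ} (hd : 0 < d) {t : ι} (ht : t ∈ I) :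
    ∃ N : ℝ, ∃ s ∈ I, ∃ z ∈ U, ‖z - γ s‖ < d ∧ u (γ t) + k t ≤ u z + k s ∧
      IsLocalMax (fun y => u y - N * ‖y - γ s‖ ^ 2) z ∧
      IsMaxOn (fun s' => k s' - N * ‖z - γ s'‖ ^ 2) I s := by
  obtain ⟨ρ, hρ, hρU⟩ :=
    (hI.image_of_continuousOn hγ).exists_cthickening_subset_open hU hγU.image_subset
  set tube := cthickening ρ (γ '' I)
  have htube {s : ι} (hs : s ∈ I) : closedBall (γ s) ρ ⊆ tube :=
    closedBall_subset_cthickening (mem_image_of_mem γ hs) ρ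
  have hcompact : IsCompact (I ×ˢ tube) := hI.prod (hI.image_of_continuousOn hγ).cthickening
  have hf : ContinuousOn (fun q : ι × E => u q.2 + k q.1) (I ×ˢ tube) :=
    ((hu.mono hρU).comp continuousOn_snd fun _ hq => hq.2).add
      (hk.comp continuousOn_fst fun _ hq => hq.1)
  have hg : ContinuousOn (fun q : ι × E => ‖q.2 - γ q.1‖ ^ 2) (I ×ˢ tube) :=
    (continuousOn_snd.sub (hγ.comp continuousOn_fst fun _ hq => hq.1)).norm.pow 2
  obtain ⟨N, ⟨s, z⟩, ⟨hs, hz⟩, hmax, hpen, hval⟩ := exists_isMaxOn_sub_mul hcompact hf hg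
    (fun _ _ => by positivity) (x₀ := (t, γ t)) ⟨ht, htube ht (mem_closedBall_self hρ.le)⟩ (by simp)
    (d := min ρ d ^ 2) (by positivity)
  have hclose : ‖z - γ s‖ < min ρ d := lt_of_pow_lt_pow_left₀ 2 (by positivity) hpen
  have hmax (s' : ι) (hs' : s' ∈ I) (z' : E) (hz' : z' ∈ tube) :
      u z' + k s' - N * ‖z' - γ s'‖ ^ 2 ≤ u z + k s - N * ‖z - γ s‖ ^ 2 :=
    isMaxOn_iff.1 hmax (s', z') ⟨hs', hz'⟩
  refine ⟨N, s, hs, z, hρU hz, hclose.trans_le (min_le_right _ _), hval, ?_,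
    isMaxOn_iff.2 fun s' hs' => by linarith [hmax s' hs' z hz]⟩
  have hball : ball (γ s) ρ ∈ 𝓝 z :=
    isOpen_ball.mem_nhds (mem_ball_iff_norm.2 (hclose.trans_le (min_le_left _ _)))
  filter_upwards [hball] with y hy
  linarith [hmax s hs y (htube hs (ball_subset_closedBall hy))]

lemma gradient_const_mul_norm_sub_sq (N : ℝ) (c z : Eu n) :
    gradient (fun y : Eu n => N * ‖y - c‖ ^ 2) z = (2 * N) • (z - c) := by
  refine HasGradientAt.gradient (hasGradientAt_iff_hasFDerivAt.2 ?_)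
  refine ((((hasFDerivAt_id z).sub_const c).norm_sq).const_mul N).congr_fderiv ?_
  ext w
  simp
  ring

lemma nonneg_of_hasDerivAt_of_isMaxOn_Icc {f : ℝ → ℝ} {f' a s T : ℝ} (hf : HasDerivAt f f' s)
    (has : a < s) (hsT : s ≤ T) (hmax : IsMaxOn f (Icc a T) s) : 0 ≤ f' := by
  have hslope := hasDerivWithinAt_iff_tendsto_slope' self_notMem_Iio |>.1
    (hf.hasDerivWithinAt (s := Iio s))
  refine ge_of_tendsto hslope ?_
  filter_upwards [Ioo_mem_nhdsLT has] with y hy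
  rw [slope_def_field]
  exact div_nonneg_of_nonpos
    (sub_nonpos.2 (hmax ⟨hy.1.le, hy.2.le.trans hsT⟩)) (sub_nonpos.2 hy.2.le)

variable {H : Eu n → Eu n → ℝ} {Ω U : Set (Eu n)} {u : Eu n → ℝ}

lemma ViscSub.exists_mem_Icc_le (hv : ViscSub H Ω u) (hU : IsOpen U) (hUΩ : U ⊆ Ω)
    (hu : ContinuousOn u U) {γ γ' : ℝ → Eu n} (hγ : ∀ s, HasDerivAt γ (γ' s) s) {T : ℝ}
    (hT : 0 ≤ T) (hγU : MapsTo γ (Icc 0 T) U) {c : ℝ} (hc : c * T < u (γ T) - u (γ 0)) :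
    ∃ s ∈ Icc 0 T, ∃ z ∈ U, ∃ p, H z p ≤ 0 ∧ c ≤ inner ℝ p (γ' s) := by
  have hγc : Continuous γ := continuous_iff_continuousAt.2 fun s => (hγ s).continuousAt
  have h0 : (0 : ℝ) ∈ Icc 0 T := ⟨le_rfl, hT⟩
  obtain ⟨d, hd, hud⟩ := Metric.continuousAt_iff.1 (hu.continuousAt (hU.mem_nhds (hγU h0)))
    (u (γ T) - u (γ 0) - c * T) (by linarith)
  obtain ⟨N, s, hs, z, hzU, hclose, hval, hzmax, hsmax⟩ := exists_penalized_isLocalMax hU hu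
    isCompact_Icc hγc.continuousOn hγU (k := fun s => -c * s) (by fun_prop) hd
    (right_mem_Icc.2 hT)
  have hs_pos : 0 < s := by
    refine hs.1.lt_of_ne fun hs0 => ?_
    subst hs0
    have hz := (abs_lt.1 (hud (x := z) (by rwa [dist_eq_norm]))).2
    linarith
  have hH : H z ((2 * N) • (z - γ s)) ≤ 0 := by
    rw [← gradient_const_mul_norm_sub_sq]
    exact hv _ (contDiff_const.mul ((contDiff_id.sub contDiff_const).norm_sq ℝ)) z (hUΩ hzU)
      (hzmax.on Ω)
  refine ⟨s, hs, z, hzU, _, hH, ?_⟩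
  have hderiv : HasDerivAt (fun s' => -c * s' - N * ‖z - γ s'‖ ^ 2)
      (-c * 1 - N * (2 * inner ℝ (z - γ s) (-γ' s))) s :=
    ((hasDerivAt_id s).const_mul (-c)).sub ((((hγ s).const_sub z).norm_sq).const_mul N)
  have hnonneg := nonneg_of_hasDerivAt_of_isMaxOn_Icc hderiv hs_pos hs.2 hsmax
  rw [inner_neg_right] at hnonneg
  rw [real_inner_smul_left]
  linarith

lemma ViscSub.sub_le_of_curve (hv : ViscSub H Ω u) (hU : IsOpen U) (hUΩ : U ⊆ Ω)
    (hu : ContinuousOn u U) {γ γ' : ℝ → Eu n} (hγ : ∀ s, HasDerivAt γ (γ' s) s) {T : ℝ}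
    (hT : 0 ≤ T) (hγU : MapsTo γ (Icc 0 T) U) {m : ℝ}
    (hm : ∀ s ∈ Icc 0 T, ∀ z ∈ U, ∀ p, H z p ≤ 0 → inner ℝ p (γ' s) ≤ m) :
    u (γ T) - u (γ 0) ≤ m * T := by
  rcases hT.eq_or_lt with rfl | hT_pos
  · simp
  by_contra! hlt
  obtain ⟨c, hmc, hc⟩ := exists_between ((lt_div_iff₀ hT_pos).2 hlt)
  obtain ⟨s, hs, z, hz, p, hp, hcp⟩ :=
    hv.exists_mem_Icc_le hU hUΩ hu hγ hT hγU ((lt_div_iff₀ hT_pos).1 hc)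
  linarith [hm s hs z hz p hp]

lemma ViscSub.slopeLE (hv : ViscSub H Ω u) (hU : IsOpen U) (hUΩ : U ⊆ Ω) (hu : ContinuousOn u U)
    {s : Set (Eu n)} (hs : IsCompact s) (hsU : s ⊆ U) {e : Eu n} {m : ℝ}
    (hm : ∀ z ∈ U, ∀ p, H z p ≤ 0 → inner ℝ p e ≤ m) : SlopeLE u s e m := by
  obtain ⟨ρ, hρ, hρU⟩ := hs.exists_cthickening_subset_open hU hsU
  have hsmall : ∀ᶠ h in 𝓝[>] (0 : ℝ), h * ‖e‖ < ρ :=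
    nhdsWithin_le_nhds (Continuous.tendsto' (by fun_prop) 0 0 (by simp) |>.eventually_lt_const hρ)
  filter_upwards [hsmall, self_mem_nhdsWithin] with h hh (h_pos : 0 < h) y hy
  have hline (t : ℝ) : HasDerivAt (fun t : ℝ => y + t • e) e t := by
    simpa using ((hasDerivAt_id t).smul_const e).const_add y
  have hlineU : MapsTo (fun t : ℝ => y + t • e) (Icc 0 h) U := fun t ht => by
    refine hρU (closedBall_subset_cthickening hy ρ ?_)
    rw [mem_closedBall_iff_norm, add_sub_cancel_left, norm_smul, Real.norm_of_nonneg ht.1]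
    exact (mul_le_mul_of_nonneg_right ht.2 (norm_nonneg e)).trans hh.le
  have hcurve := hv.sub_le_of_curve hU hUΩ hu hline h_pos.le hlineU fun _ _ => hm
  simp only [zero_smul, add_zero] at hcurve
  linarith

end ViscosityCurves

section Hamiltonian

open Matrix (toEuclideanCLM)

variable {A : Matrix (Fin n) (Fin n) ℝ} {α : Eu n → Matrix (Fin n) (Fin n) ℝ}
  {b : Eu n → Eu n} {θ : ℝ} {x p q : Eu n}

lemma dotp_eq_inner (x y : Eu n) : dotp x y = inner ℝ x y := by
  simp [dotp, PiLp.inner_apply, mul_comm]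

lemma mquad_eq_inner (A : Matrix (Fin n) (Fin n) ℝ) (p : Eu n) :
    mquad A p = inner ℝ p (toEuclideanCLM (𝕜 := ℝ) A p) := by
  simp only [mquad, Matrix.inner_toEuclideanCLM, dotProduct, Matrix.mulVec, Finset.mul_sum]
  exact Finset.sum_congr rfl fun i _ => Finset.sum_congr rfl fun j _ => by ring

lemma inner_toEuclideanCLM_comm (hA : A.IsSymm) (p q : Eu n) :
    inner ℝ p (toEuclideanCLM (𝕜 := ℝ) A q) = inner ℝ q (toEuclideanCLM (𝕜 := ℝ) A p) := by
  rw [Matrix.inner_toEuclideanCLM, Matrix.inner_toEuclideanCLM, Matrix.dotProduct_mulVec,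
    ← Matrix.mulVec_transpose, hA.eq, dotProduct_comm]

lemma mquad_add (hA : A.IsSymm) (p q : Eu n) :
    mquad A (p + q) = mquad A p + 2 * inner ℝ p (toEuclideanCLM (𝕜 := ℝ) A q) + mquad A q := by
  simp only [mquad_eq_inner, map_add, inner_add_left, inner_add_right,
    inner_toEuclideanCLM_comm hA q p]
  ring

lemma mquad_neg (A : Matrix (Fin n) (Fin n) ℝ) (p : Eu n) : mquad A (-p) = mquad A p := by
  simp [mquad_eq_inner]

lemma memS.two_mul_inner_le (hA : memS θ A) (hθ : 0 ≤ θ) (p q : Eu n) :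
    2 * inner ℝ p (toEuclideanCLM (𝕜 := ℝ) A q) ≤ mquad A p + mquad A q := by
  have hnonneg : 0 ≤ mquad A (p + -q) := le_trans (by positivity) (hA.2 _).1
  rw [mquad_add hA.1, mquad_neg, map_neg, inner_neg_right] at hnonneg
  linarith

lemma memS.two_mul_mul_norm_le (hA : memS θ A) (hθ : 0 ≤ θ) (c : ℝ) (q : Eu n) :
    2 * c * ‖toEuclideanCLM (𝕜 := ℝ) A q‖ ≤ θ⁻¹ * c ^ 2 + mquad A q := by
  set y := toEuclideanCLM (𝕜 := ℝ) A q
  rcases eq_or_ne y 0 with hy | hy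
  · have hq : 0 ≤ mquad A q := le_trans (by positivity) (hA.2 q).1
    rw [hy, norm_zero, mul_zero]
    positivity
  have hy' : ‖y‖ ≠ 0 := norm_ne_zero_iff.2 hy
  have hp := hA.two_mul_inner_le hθ ((c / ‖y‖) • y) q
  have hupper := (hA.2 ((c / ‖y‖) • y)).2
  rw [norm_smul, Real.norm_eq_abs, abs_div, abs_norm, div_mul_cancel₀ _ hy', sq_abs] at hupper
  rw [real_inner_smul_left, real_inner_self_eq_norm_sq] at hp
  calc 2 * c * ‖y‖ = 2 * (c / ‖y‖ * ‖y‖ ^ 2) := by field_simp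
    _ ≤ _ := by linarith

lemma memS.norm_toEuclideanCLM_le (hA : memS θ A) (hθ : 0 ≤ θ) (q : Eu n) :
    ‖toEuclideanCLM (𝕜 := ℝ) A q‖ ≤ θ⁻¹ * ‖q‖ := by
  rcases eq_or_ne q 0 with rfl | hq
  · simp
  refine le_of_mul_le_mul_left ?_ (norm_pos_iff.2 hq)
  linarith [hA.two_mul_mul_norm_le hθ ‖q‖ q, (hA.2 q).2]

/-- The velocity `D_p H_α(x, q) = b(x) + 2 α(x) q` dual to the momentum `q`. -/
def hamVel (α : Eu n → Matrix (Fin n) (Fin n) ℝ) (b : Eu n → Eu n) (x q : Eu n) : Eu n :=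
  b x + (2 : ℝ) • toEuclideanCLM (𝕜 := ℝ) (α x) q

lemma inner_hamVel (p q : Eu n) : inner ℝ p (hamVel α b x q) =
    dotp (b x) p + 2 * inner ℝ p (toEuclideanCLM (𝕜 := ℝ) (α x) q) := by
  rw [hamVel, inner_add_right, inner_smul_right, dotp_eq_inner, real_inner_comm]

lemma inner_hamVel_self (q : Eu n) :
    inner ℝ q (hamVel α b x q) = Ham α b x q + mquad (α x) q := by
  rw [inner_hamVel, Ham, mquad_eq_inner]
  ring

lemma inner_hamVel_le (hα : memS θ (α x)) (hθ : 0 ≤ θ) (p q : Eu n) :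
    inner ℝ p (hamVel α b x q) ≤ Ham α b x p + mquad (α x) q := by
  rw [inner_hamVel, Ham]
  linarith [hα.two_mul_inner_le hθ p q]

lemma norm_hamVel_le (hα : memS θ (α x)) (hθ : 0 ≤ θ) (q : Eu n) :
    ‖hamVel α b x q‖ ≤ ‖b x‖ + 2 * (θ⁻¹ * ‖q‖) := by
  refine (norm_add_le _ _).trans ?_
  rw [norm_smul, Real.norm_two]
  gcongr
  exact hα.norm_toEuclideanCLM_le hθ q

lemma norm_le_of_ham_nonpos (hα : memS θ (α x)) (hθ : 0 < θ) (hp : Ham α b x p ≤ 0) :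
    ‖p‖ ≤ ‖b x‖ / θ := by
  rcases eq_or_ne p 0 with rfl | hp0
  · rw [norm_zero]
    positivity
  rw [Ham, dotp_eq_inner] at hp
  have hlower := (hα.2 p).1
  have hCS := neg_le_of_abs_le (abs_real_inner_le_norm (b x) p)
  rw [le_div_iff₀ hθ]
  refine le_of_mul_le_mul_right ?_ (norm_pos_iff.2 hp0)
  linarith

lemma continuousOn_ham {s : Set (Eu n)} (hα : ContinuousOn α s) (hb : ContinuousOn b s) :
    ContinuousOn (fun y : Eu n × Eu n => Ham α b y.1 y.2) (s ×ˢ univ) := by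
  have hfst : MapsTo (Prod.fst : Eu n × Eu n → Eu n) (s ×ˢ univ) s := fun y hy => hy.1
  have hαc := hα.comp continuousOn_fst hfst
  have hbc := hb.comp continuousOn_fst hfst
  refine .add (continuousOn_finsetSum _ fun i _ => continuousOn_finsetSum _ fun j _ => ?_)
    (continuousOn_finsetSum _ fun i _ => ?_)
  · exact (((continuous_apply_apply i j).comp_continuousOn hαc).mul (by fun_prop)).mul
      (by fun_prop)
  · exact ((EuclideanSpace.proj i).continuous.comp_continuousOn hbc).mul (by fun_prop)

lemma exists_forall_ham_le {s : Set (Eu n)} (hs : IsCompact s) (hα : ContinuousOn α s)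
    (hb : ContinuousOn b s) (hθ : 0 < θ) (hαθ : ∀ x ∈ s, memS θ (α x)) {τ : ℝ} (hτ : 0 < τ) :
    ∃ δ > 0, ∀ x ∈ s, ∀ z ∈ s, dist x z < δ → ∀ p, Ham α b z p ≤ 0 → Ham α b x p ≤ τ := by
  obtain ⟨B, hB⟩ := hs.exists_bound_of_continuousOn hb
  have hunif := (hs.prod (isCompact_closedBall 0 (B / θ))).uniformContinuousOn_of_continuous
    ((continuousOn_ham hα hb).mono (prod_mono_right (subset_univ _)))
  obtain ⟨δ, hδ, h⟩ := Metric.uniformContinuousOn_iff.1 hunif τ hτ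
  refine ⟨δ, hδ, fun x hx z hz hxz p hp => ?_⟩
  have hpB : p ∈ closedBall (0 : Eu n) (B / θ) := mem_closedBall_zero_iff.2 <|
    (norm_le_of_ham_nonpos (hαθ z hz) hθ hp).trans (by gcongr; exact hB z hz)
  have hclose := h (x, p) ⟨hx, hpB⟩ (z, p) ⟨hz, hpB⟩ (by simpa [Prod.dist_eq] using hxz)
  linarith [(abs_lt.1 hclose).2]

end Hamiltonian

section Flows

open MeasureTheory
open scoped NNReal

variable {E : Type*} [NormedAddCommGroup E] [NormedSpace ℝ E]
  {b : E → E} {X : ℝ → E → E} {K : ℝ≥0}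

/-- `X t x` is the position at time `t` of the solution of `Ẋ = b(X)` starting from `x`. -/
structure IsFlow (b : E → E) (X : ℝ → E → E) : Prop where
  map_zero (x : E) : X 0 x = x
  hasDerivAt (x : E) (t : ℝ) : HasDerivAt (fun s => X s x) (b (X t x)) t

namespace IsFlow

protected lemma continuous (hX : IsFlow b X) (x : E) : Continuous fun t => X t x :=
  continuous_iff_continuousAt.2 fun t => (hX.hasDerivAt x t).continuousAt

lemma dist_le (hX : IsFlow b X) (hb : LipschitzWith K b) {t : ℝ} (ht : 0 ≤ t) (x y : E) :
    dist (X t x) (X t y) ≤ Real.exp (K * t) * dist x y := by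
  have h := dist_le_of_trajectories_ODE (v := fun _ => b) (fun _ => hb)
    (hX.continuous x).continuousOn (fun s _ => (hX.hasDerivAt x s).hasDerivWithinAt)
    (hX.continuous y).continuousOn (fun s _ => (hX.hasDerivAt y s).hasDerivWithinAt)
    le_rfl t ⟨ht, le_rfl⟩
  rwa [hX.map_zero, hX.map_zero, sub_zero, mul_comm] at h

lemma dist_le_of_le (hX : IsFlow b X) (hb : LipschitzWith K b) {t T : ℝ} (ht : 0 ≤ t)
    (htT : t ≤ T) (x y : E) : dist (X t x) (X t y) ≤ Real.exp (K * T) * dist x y :=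
  (hX.dist_le hb ht x y).trans (by gcongr)

lemma lipschitzWith (hX : IsFlow b X) (hb : LipschitzWith K b) {t T : ℝ} (ht : 0 ≤ t)
    (htT : t ≤ T) : LipschitzWith (Real.exp (K * T)).toNNReal (X t) :=
  .of_dist_le_mul fun x y => by
    rw [Real.coe_toNNReal _ (Real.exp_pos _).le]
    exact hX.dist_le_of_le hb ht htT x y

lemma map_map (hX : IsFlow b X) (hb : LipschitzWith K b) {s : ℝ} (hs : 0 ≤ s) (t : ℝ) (x : E) :
    X s (X t x) = X (s + t) x := by
  have hderiv (r : ℝ) : HasDerivAt (fun s => X (s + t) x) (b (X (r + t) x)) r :=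
    (hX.hasDerivAt x (r + t)).comp_add_const r t
  have h := dist_le_of_trajectories_ODE (v := fun _ => b) (fun _ => hb)
    (hX.continuous (X t x)).continuousOn (fun r _ => (hX.hasDerivAt _ r).hasDerivWithinAt)
    (continuous_iff_continuousAt.2 fun r => (hderiv r).continuousAt).continuousOn
    (fun r _ => (hderiv r).hasDerivWithinAt) (δ := 0) (by simp [hX.map_zero]) s ⟨hs, le_rfl⟩
  simpa using h

lemma norm_sub_sub_le (hX : IsFlow b X) (hb : LipschitzWith K b) {t : ℝ} (ht : t ∈ Icc (0 : ℝ) 1)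
    (x y : E) : ‖X t x - X t y - (x - y)‖ ≤ K * Real.exp K * ‖x - y‖ * t := by
  have h := norm_image_sub_le_of_norm_deriv_le_segment' (a := 0) (b := 1)
    (fun s _ => ((hX.hasDerivAt x s).sub (hX.hasDerivAt y s)).hasDerivWithinAt)
    (C := K * Real.exp K * ‖x - y‖) (fun s hs => ?_) t ht
  · simpa [hX.map_zero] using h
  · have hspeed := hX.dist_le_of_le hb hs.1 hs.2.le x y
    rw [mul_one, dist_eq_norm x] at hspeed
    rw [← dist_eq_norm, mul_assoc]
    exact (hb.dist_le_mul _ _).trans (by gcongr)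

lemma norm_sub_le (hX : IsFlow b X) {B t : ℝ} (ht : 0 ≤ t) {x : E}
    (hB : ∀ s ∈ Icc 0 t, ‖b (X s x)‖ ≤ B) : ‖X t x - x‖ ≤ B * t := by
  have h := norm_image_sub_le_of_norm_deriv_le_segment' (a := 0) (b := t)
    (fun s _ => (hX.hasDerivAt x s).hasDerivWithinAt)
    (fun s hs => hB s ⟨hs.1, hs.2.le⟩) t ⟨ht, le_rfl⟩
  simpa [hX.map_zero] using h

lemma norm_sub_add_smul_le (hX : IsFlow b X) (hb : LipschitzWith K b) {σ h : ℝ} (hh : 0 ≤ h)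
    {x y : E} (hσ : ∀ s ∈ Icc 0 h, dist (X s y) x ≤ σ) :
    ‖X h y - (y + h • b x)‖ ≤ K * σ * h := by
  have hderiv (s : ℝ) : HasDerivAt (fun s => X s y - s • b x) (b (X s y) - b x) s := by
    simpa using (hX.hasDerivAt y s).fun_sub ((hasDerivAt_id s).smul_const (b x))
  have h := norm_image_sub_le_of_norm_deriv_le_segment' (a := 0) (b := h)
    (fun s _ => (hderiv s).hasDerivWithinAt) (C := K * σ) (fun s hs => ?_) h ⟨hh, le_rfl⟩
  · simpa [hX.map_zero, sub_sub, add_comm] using h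
  · rw [← dist_eq_norm]
    exact (hb.dist_le_mul _ _).trans (by gcongr; exact hσ s ⟨hs.1, hs.2.le⟩)

lemma eventually_dist_le (hX : IsFlow b X) (hb : LipschitzWith K b) {x : E} {ε σ : ℝ} (hσ : 0 < σ)
    (hε : Real.exp K * ε ≤ σ / 2) :
    ∀ᶠ h in 𝓝[>] (0 : ℝ), ∀ y ∈ closedBall x ε, ∀ s ∈ Icc 0 h, dist (X s y) x ≤ σ := by
  obtain ⟨δ, hδ, hxδ⟩ := Metric.continuousAt_iff.1 (hX.continuous x).continuousAt _ (half_pos hσ)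
  filter_upwards [Ioo_mem_nhdsGT (lt_min hδ one_pos)] with h hh y hy s hs
  have hs_lt : s < min δ 1 := hs.2.trans_lt hh.2
  have hstart : dist (X s x) x ≤ σ / 2 := by
    have := hxδ (x := s) (by
      rw [Real.dist_0_eq_abs, abs_of_nonneg hs.1]
      exact hs_lt.trans_le (min_le_left _ _))
    rw [hX.map_zero] at this
    exact this.le
  have hspread : dist (X s y) (X s x) ≤ σ / 2 := by
    have := hX.dist_le_of_le hb hs.1 (hs_lt.le.trans (min_le_right _ _)) y x
    rw [mul_one] at this
    exact this.trans (le_trans (by gcongr; exact hy) hε)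
  linarith [dist_triangle (X s y) (X s x) x]

end IsFlow

lemma SlopeLE.comp_flow {U : E → ℝ} {s s' : Set E} {e : E} {m t : ℝ} {L : ℝ≥0}
    (hslope : SlopeLE U s' e m) (hU : LipschitzWith L U) (hX : IsFlow b X)
    (hb : LipschitzWith K b) (ht : t ∈ Icc (0 : ℝ) 1) (hmaps : MapsTo (X t) s s') :
    SlopeLE (fun y => U (X t y)) s e (m + L * (K * Real.exp K * ‖e‖ * t)) := by
  filter_upwards [hslope, self_mem_nhdsWithin] with h hh (h_pos : 0 < h) y hy
  have herr : U (X t (y + h • e)) - U (X t y + h • e) ≤ L * (h * (K * Real.exp K * ‖e‖ * t)) := by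
    refine (le_abs_self _).trans ((hU.dist_le_mul _ _).trans ?_)
    gcongr
    have := hX.norm_sub_sub_le hb ht (y + h • e) y
    rw [add_sub_cancel_left, norm_smul, Real.norm_of_nonneg h_pos.le] at this
    rw [dist_eq_norm, ← sub_sub]
    linarith
  linarith [hh _ (hmaps hy)]

/-- The integral `∫₀ᵀ φ(X_s(y)) ds` of `φ` along the trajectory of `y`: a Lyapunov function for the
flow when `φ ≥ 0` vanishes near the points the trajectories reach at time `T`. -/
def flowIntegral (φ : E → ℝ) (X : ℝ → E → E) (T : ℝ) (y : E) : ℝ := ∫ s in (0 : ℝ)..T, φ (X s y)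

variable {φ : E → ℝ} {T : ℝ}

lemma IsFlow.intervalIntegrable_comp (hX : IsFlow b X) (hφ : Continuous φ) (y : E) (a c : ℝ) :
    IntervalIntegrable (fun s => φ (X s y)) volume a c :=
  (hφ.comp (hX.continuous y)).intervalIntegrable a c

lemma exists_lipschitzWith_flowIntegral (hX : IsFlow b X) (hb : LipschitzWith K b) {Kφ : ℝ≥0}
    (hφ : LipschitzWith Kφ φ) (hT : 0 ≤ T) : ∃ L, LipschitzWith L (flowIntegral φ X T) := by
  refine ⟨_, .of_dist_le' (K := Kφ * Real.exp (K * T) * T) fun y z => ?_⟩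
  have hint (y : E) := hX.intervalIntegrable_comp hφ.continuous y 0 T
  have hbound := intervalIntegral.norm_integral_le_of_norm_le_const (a := 0) (b := T)
    (f := fun s => φ (X s y) - φ (X s z)) (C := Kφ * (Real.exp (K * T) * dist y z)) fun s hs => by
      rw [uIoc_of_le hT] at hs
      exact (hφ.dist_le_mul _ _).trans
        (by gcongr; exact hX.dist_le_of_le hb hs.1.le hs.2 y z)
  rw [intervalIntegral.integral_sub (hint y) (hint z), sub_zero, abs_of_nonneg hT] at hbound
  rw [Real.dist_eq]
  exact hbound.trans_eq (by ring)

lemma flowIntegral_map_add (hX : IsFlow b X) (hb : LipschitzWith K b) (hφ : Continuous φ)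
    (hT : 0 ≤ T) (h : ℝ) (y : E) :
    flowIntegral φ X T (X h y) + ∫ s in (0 : ℝ)..h, φ (X s y) =
      flowIntegral φ X T y + ∫ s in T..(T + h), φ (X s y) := by
  have hint := hX.intervalIntegrable_comp hφ y
  have hshift : flowIntegral φ X T (X h y) = ∫ s in h..(T + h), φ (X s y) := by
    calc flowIntegral φ X T (X h y) = ∫ s in (0 : ℝ)..T, φ (X (s + h) y) := by
          refine intervalIntegral.integral_congr fun s hs => ?_
          rw [uIcc_of_le hT] at hs
          simp only [hX.map_map hb hs.1]
      _ = ∫ s in h..(T + h), φ (X s y) := by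
          rw [intervalIntegral.integral_comp_add_right fun s => φ (X s y), zero_add]
  rw [hshift, add_comm, intervalIntegral.integral_add_adjacent_intervals (hint 0 h) (hint h _),
    flowIntegral, intervalIntegral.integral_add_adjacent_intervals (hint 0 T) (hint T _)]

lemma flowIntegral_map_le (hX : IsFlow b X) (hb : LipschitzWith K b) (hφ : Continuous φ)
    (hT : 0 ≤ T) {h : ℝ} (hh : 0 ≤ h) {y : E} {c d : ℝ} (hc : ∀ s ∈ Icc 0 h, c ≤ φ (X s y))
    (hd : ∀ s ∈ Icc T (T + h), φ (X s y) ≤ d) :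
    flowIntegral φ X T (X h y) ≤ flowIntegral φ X T y + h * (d - c) := by
  have hint := hX.intervalIntegrable_comp hφ y
  have hstart : h * c ≤ ∫ s in (0 : ℝ)..h, φ (X s y) := by
    simpa using intervalIntegral.integral_mono_on hh (by simp) (hint 0 h) hc
  have hend : ∫ s in T..(T + h), φ (X s y) ≤ h * d := by
    simpa using intervalIntegral.integral_mono_on (by linarith) (hint T (T + h)) (by simp) hd
  linarith [flowIntegral_map_add hX hb hφ hT h y]

lemma slopeLE_flowIntegral (hX : IsFlow b X) (hb : LipschitzWith K b) (hφ : LipschitzWith 1 φ)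
    (hT : 0 ≤ T) {L : ℝ≥0} (hL : LipschitzWith L (flowIntegral φ X T)) {x : E}
    (hx : ∀ t ≥ T, φ (X t x) ≤ 0) {ε σ : ℝ} (hε₀ : 0 ≤ ε) (hσ : 0 < σ)
    (hε : Real.exp (K * (T + 1)) * ε ≤ σ / 2) :
    SlopeLE (flowIntegral φ X T) (closedBall x ε) (b x) (-φ x + (2 + L * K) * σ) := by
  have hφ_le (y z : E) : φ y ≤ φ z + dist y z := by
    simpa using hφ.le_add_mul y z
  have hε' : Real.exp K * ε ≤ σ / 2 := le_trans (by gcongr; nlinarith [K.2]) hε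
  filter_upwards [hX.eventually_dist_le hb hσ hε', Ioo_mem_nhdsGT one_pos] with h hnear hh y hy
  have hdecay : flowIntegral φ X T (X h y) ≤ flowIntegral φ X T y + h * (σ - (φ x - σ)) := by
    refine flowIntegral_map_le hX hb hφ.continuous hT hh.1.le (fun s hs => ?_) fun s hs => ?_
    · linarith [hφ_le x (X s y), dist_comm x (X s y), hnear y hy s hs]
    · have hspread := hX.dist_le_of_le hb (hT.trans hs.1) (hs.2.trans (by linarith [hh.2])) y x
        (T := T + 1)
      have hy_le : Real.exp (K * (T + 1)) * dist y x ≤ σ / 2 := le_trans (by gcongr; exact hy) hε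
      linarith [hφ_le (X s y) (X s x), hx s hs.1]
  have heuler :
      flowIntegral φ X T (y + h • b x) ≤ flowIntegral φ X T (X h y) + L * (K * σ * h) := by
    refine (hL.le_add_mul _ (X h y)).trans ?_
    rw [dist_comm, dist_eq_norm]
    gcongr
    exact hX.norm_sub_add_smul_le hb hh.1.le (hnear y hy)
  linarith

end Flows

section InwardFlows

open scoped NNReal

section ForwardInvariance

variable {E : Type*} [NormedAddCommGroup E] [NormedSpace ℝ E] {b : E → E} {X : ℝ → E → E}
  {ρ : E → ℝ} {x : E} {t : ℝ}

lemma IsFlow.eventually_sign_eq (hX : IsFlow b X) (hρ : Differentiable ℝ ρ)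
    (hin : ∀ y ∈ frontier {y | ρ y < 0}, fderiv ℝ ρ y (b y) < 0)
    (ht : X t x ∈ frontier {y | ρ y < 0}) :
    ∀ᶠ s in 𝓝 t, SignType.sign (ρ (X s x)) = SignType.sign (t - s) := by
  have hderiv : HasDerivAt (fun s => ρ (X s x)) (fderiv ℝ ρ (X t x) (b (X t x))) t :=
    (hρ _).hasFDerivAt.comp_hasDerivAt t (hX.hasDerivAt x t)
  have hzero : ρ (X t x) = 0 := frontier_lt_subset_eq hρ.continuous continuous_const ht
  exact eventually_nhdsWithin_sign_eq_of_deriv_neg (hderiv.deriv ▸ hin _ ht) hzero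

lemma IsFlow.mem_closure_of_inward (hX : IsFlow b X) (hρ : Differentiable ℝ ρ)
    (hin : ∀ y ∈ frontier {y | ρ y < 0}, fderiv ℝ ρ y (b y) < 0)
    (hx : x ∈ closure {y | ρ y < 0}) (ht : 0 ≤ t) : X t x ∈ closure {y | ρ y < 0} := by
  have hclosed : IsClosed ({s | X s x ∈ closure {y | ρ y < 0}} ∩ Icc 0 t) :=
    (isClosed_closure.preimage (hX.continuous x)).inter isClosed_Icc
  refine hclosed.Icc_subset_of_forall_exists_gt (by simpa [hX.map_zero] using hx) ?_ ⟨ht, le_rfl⟩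
  rintro s ⟨hs, -⟩ T hsT
  have hopen : IsOpen {y | ρ y < 0} := isOpen_lt hρ.continuous continuous_const
  have hev : ∀ᶠ r in 𝓝[>] s, X r x ∈ {y | ρ y < 0} := by
    by_cases hmem : X s x ∈ {y | ρ y < 0}
    · exact nhdsWithin_le_nhds ((hX.continuous x).continuousAt.eventually_mem (hopen.mem_nhds hmem))
    · have hfront : X s x ∈ frontier {y | ρ y < 0} := ⟨hs, by rwa [hopen.interior_eq]⟩
      filter_upwards [nhdsWithin_le_nhds (hX.eventually_sign_eq hρ hin hfront),
        self_mem_nhdsWithin] with r hr (hsr : s < r)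
      rwa [sign_neg (sub_neg.2 hsr), sign_eq_neg_one_iff] at hr
  obtain ⟨r, hr, hrT⟩ := (hev.and (Ioc_mem_nhdsGT hsT)).exists
  exact ⟨r, subset_closure hr, hrT⟩

lemma IsFlow.mem_of_inward (hX : IsFlow b X) (hρ : Differentiable ℝ ρ)
    (hin : ∀ y ∈ frontier {y | ρ y < 0}, fderiv ℝ ρ y (b y) < 0)
    (hx : x ∈ closure {y | ρ y < 0}) (ht : 0 < t) : X t x ∈ {y | ρ y < 0} := by
  by_contra hnot
  have hfront : X t x ∈ frontier {y | ρ y < 0} :=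
    ⟨hX.mem_closure_of_inward hρ hin hx ht.le, fun h => hnot (interior_subset h)⟩
  obtain ⟨s, hs, hst⟩ := (((hX.eventually_sign_eq hρ hin hfront).filter_mono
    nhdsWithin_le_nhds).and (Ioo_mem_nhdsLT ht)).exists
  rw [sign_pos (sub_pos.2 hst.2), sign_eq_one_iff] at hs
  have hle : ρ (X s x) ≤ 0 := closure_lt_subset_le hρ.continuous continuous_const
    (hX.mem_closure_of_inward hρ hin hx hst.1.le)
  exact hs.not_ge hle

end ForwardInvariance

variable {Ω : Set (Eu n)} {b : Eu n → Eu n} {K : ℝ≥0} {X : ℝ → Eu n → Eu n} {x : Eu n}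

lemma GAS.isFlow (hX : GAS b X) : IsFlow b X := ⟨hX.1, hX.2.1⟩

/-- `X` is the flow of the `K`-Lipschitz field `b`, has the origin as global attractor, and carries
the closure of the bounded open set `Ω` into `Ω` in positive time. -/
structure InwardFlow (Ω : Set (Eu n)) (b : Eu n → Eu n) (K : ℝ≥0) (X : ℝ → Eu n → Eu n) :
    Prop where
  isOpen : IsOpen Ω
  isBounded : Bornology.IsBounded Ω
  lipschitz : LipschitzWith K b
  gas : GAS b X
  mapsTo {t : ℝ} (ht : 0 < t) : MapsTo (X t) (closure Ω) Ω

namespace InwardFlow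

lemma of_isBdC1With {ν : Eu n → Eu n} (hΩ : IsBdC1With Ω ν) (hb : LipschitzWith K b)
    (hX : GAS b X) (hν : ∀ x ∈ frontier Ω, dotp (b x) (ν x) < 0) : InwardFlow Ω b K X := by
  obtain ⟨hopen, hbdd, ρ, hρ, rfl, hnormal⟩ := hΩ
  have hin : ∀ x ∈ frontier {y | ρ y < 0}, fderiv ℝ ρ x (b x) < 0 := fun x hx => by
    have hneg := hν x hx
    rw [(hnormal x hx).2, dotp_eq_inner, real_inner_comm, real_inner_smul_left,
      inner_gradient_left] at hneg
    exact neg_of_mul_neg_right hneg (by positivity)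
  exact ⟨hopen, hbdd, hb, hX, fun ht x hx =>
    hX.isFlow.mem_of_inward (hρ.differentiable one_ne_zero) hin hx ht⟩

lemma isFlow (hX : InwardFlow Ω b K X) : IsFlow b X := hX.gas.isFlow

lemma isCompact_closure (hX : InwardFlow Ω b K X) : IsCompact (closure Ω) :=
  hX.isBounded.isCompact_closure

lemma mapsTo_closure (hX : InwardFlow Ω b K X) {t : ℝ} (ht : 0 ≤ t) :
    MapsTo (X t) (closure Ω) (closure Ω) := by
  rcases ht.eq_or_lt with rfl | ht
  · exact fun x hx => by rwa [hX.isFlow.map_zero]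
  · exact fun x hx => subset_closure (hX.mapsTo ht hx)

lemma exists_norm_le (hX : InwardFlow Ω b K X) : ∃ B, ∀ x ∈ closure Ω, ‖b x‖ ≤ B :=
  hX.isCompact_closure.exists_bound_of_continuousOn hX.lipschitz.continuous.continuousOn

lemma continuous_flowMap (hX : InwardFlow Ω b K X) {t : ℝ} (ht : 0 ≤ t) : Continuous (X t) :=
  (hX.isFlow.lipschitzWith hX.lipschitz ht le_rfl).continuous

lemma exists_closedBall_subset (hX : InwardFlow Ω b K X) {t : ℝ} (ht : 0 < t) :
    ∃ d > 0, ∀ x ∈ closure Ω, closedBall (X t x) d ⊆ Ω := by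
  have hcompact : IsCompact (X t '' closure Ω) :=
    hX.isCompact_closure.image (hX.continuous_flowMap ht.le)
  obtain ⟨d, hd, hdΩ⟩ :=
    hcompact.exists_cthickening_subset_open hX.isOpen (hX.mapsTo ht).image_subset
  exact ⟨d, hd, fun x hx =>
    (closedBall_subset_cthickening (mem_image_of_mem _ hx) d).trans hdΩ⟩

lemma zero_mem_closure (hX : InwardFlow Ω b K X) (hx : x ∈ closure Ω) : (0 : Eu n) ∈ closure Ω :=
  isClosed_closure.mem_of_tendsto (hX.gas.2.2.1 x) <|
    (eventually_ge_atTop 0).mono fun _ ht => hX.mapsTo_closure ht hx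

lemma exists_forall_norm_lt (hX : InwardFlow Ω b K X) {ρ : ℝ} (hρ : 0 < ρ) :
    ∃ T, 0 ≤ T ∧ ∀ x ∈ closure Ω, ∀ t ≥ T, ‖X t x‖ < ρ := by
  obtain ⟨δ, hδ, hstable⟩ := hX.gas.2.2.2 ρ hρ
  refine hX.isCompact_closure.induction_on (p := fun s => ∃ T, 0 ≤ T ∧ ∀ x ∈ s, ∀ t ≥ T,
    ‖X t x‖ < ρ) ⟨0, le_rfl, by simp⟩ ?_ ?_ fun x _ => ?_
  · rintro s s' hss' ⟨T, hT, h⟩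
    exact ⟨T, hT, fun x hx => h x (hss' hx)⟩
  · rintro s s' ⟨T, hT, h⟩ ⟨T', -, h'⟩
    refine ⟨max T T', hT.trans (le_max_left _ _), ?_⟩
    rintro x (hx | hx) t ht
    · exact h x hx t ((le_max_left _ _).trans ht)
    · exact h' x hx t ((le_max_right _ _).trans ht)
  · obtain ⟨T, hT, hTδ⟩ := ((eventually_ge_atTop 0).and
      ((hX.gas.2.2.1 x).norm.eventually_lt_const (by simpa using hδ))).exists
    have hnear : ∀ᶠ y in 𝓝 x, ‖X T y‖ < δ :=
      (hX.continuous_flowMap hT).norm.continuousAt.eventually_lt_const hTδ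
    refine ⟨_, nhdsWithin_le_nhds hnear, T, hT, fun y hy t ht => ?_⟩
    have h := hstable (X T y) hy (t - T) (sub_nonneg.2 ht)
    rwa [hX.isFlow.map_map hX.lipschitz (sub_nonneg.2 ht), sub_add_cancel] at h

end InwardFlow

end InwardFlows

section Subsolutions

open scoped NNReal

lemma exists_mem_forall_sSup_sub_le_of_supClosed {Y : Type*} [TopologicalSpace Y] {F : Set (Y → ℝ)}
    {s : Set Y} {ε : ℝ} (hF : SupClosed F) (hne : F.Nonempty) (hs : IsCompact s)
    (hbdd : ∀ x ∈ s, BddAbove ((fun u => u x) '' F))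
    (hequi : EquicontinuousOn (fun u : F => (u : Y → ℝ)) s) (hε : 0 < ε) :
    ∃ u ∈ F, ∀ x ∈ s, sSup ((fun u => u x) '' F) - ε ≤ u x := by
  refine hs.induction_on (p := fun t => ∃ u ∈ F, ∀ x ∈ t, sSup ((fun u => u x) '' F) - ε ≤ u x)
    (hne.imp fun u hu => ⟨hu, by simp⟩) ?_ ?_ fun x hx => ?_
  · rintro t t' htt' ⟨u, hu, h⟩
    exact ⟨u, hu, fun x hx => h x (htt' hx)⟩
  · rintro t t' ⟨u, hu, h⟩ ⟨u', hu', h'⟩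
    refine ⟨u ⊔ u', hF hu hu', ?_⟩
    rintro x (hx | hx)
    · exact (h x hx).trans le_sup_left
    · exact (h' x hx).trans le_sup_right
  · obtain ⟨_, ⟨u, hu, rfl⟩, hux⟩ := exists_lt_of_lt_csSup (hne.image fun u => u x)
      (sub_lt_self (sSup ((fun u => u x) '' F)) (by positivity : 0 < ε / 3))
    refine ⟨_, hequi x hx _ (dist_mem_uniformity (by positivity : 0 < ε / 3)), u, hu,
      fun y hy => ?_⟩
    have hnear : ∀ w ∈ F, |w x - w y| < ε / 3 := fun w hw => hy ⟨w, hw⟩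
    have hsup : sSup ((fun u => u y) '' F) ≤ sSup ((fun u => u x) '' F) + ε / 3 := by
      refine csSup_le (hne.image _) (forall_mem_image.2 fun w hw => ?_)
      linarith [le_csSup (hbdd x hx) (mem_image_of_mem _ hw), (abs_lt.1 (hnear w hw)).1]
    linarith [(abs_lt.1 (hnear u hu)).2]

variable {H : Eu n → Eu n → ℝ} {Ω s : Set (Eu n)} {u : Eu n → ℝ} {b : Eu n → Eu n} {K : ℝ≥0}
  {X : ℝ → Eu n → Eu n} {x y z : Eu n} {B C t : ℝ}

/-- The Lipschitz viscosity subsolutions of `H(x, Du) = 0` in `Ω` vanishing at the origin. For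
`H = Ham α b` their pointwise supremum is `Vq α b Ω`. -/
def lipSubsolutions (H : Eu n → Eu n → ℝ) (Ω : Set (Eu n)) : Set (Eu n → ℝ) :=
  {u | (∃ K : ℝ≥0, LipschitzOnWith K u (closure Ω)) ∧ u 0 = 0 ∧ ViscSub H Ω u}

lemma vq_eq_sSup_image (α : Eu n → Matrix (Fin n) (Fin n) ℝ) :
    Vq α b Ω x = sSup ((fun u => u x) '' lipSubsolutions (Ham α b) Ω) := by
  simp only [Vq, lipSubsolutions, image, mem_ofPred_eq, and_assoc, eq_comm]

lemma zero_mem_lipSubsolutions (hΩ : IsOpen Ω) (hH : ∀ x ∈ Ω, H x 0 ≤ 0) :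
    0 ∈ lipSubsolutions H Ω := by
  refine ⟨⟨0, (LipschitzWith.const 0).lipschitzOnWith⟩, rfl, fun φ _ x hx hmax => ?_⟩
  have hmin : IsLocalMin φ x := by
    filter_upwards [hmax.isLocalMax (hΩ.mem_nhds hx)] with y hy
    simpa using hy
  rw [gradient, hmin.fderiv_eq_zero, map_zero]
  exact hH x hx

lemma ViscSub.sup {w : Eu n → ℝ} (hu : ViscSub H Ω u) (hw : ViscSub H Ω w) :
    ViscSub H Ω (u ⊔ w) := by
  intro φ hφ x hx hmax
  rcases le_total (u x) (w x) with h | h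
  · refine hw φ hφ x hx (hmax.mono fun y hy => ?_)
    simp only [Pi.sup_apply, sup_eq_right.2 h] at hy
    linarith [le_max_right (u y) (w y)]
  · refine hu φ hφ x hx (hmax.mono fun y hy => ?_)
    simp only [Pi.sup_apply, sup_eq_left.2 h] at hy
    linarith [le_max_left (u y) (w y)]

lemma supClosed_lipSubsolutions : SupClosed (lipSubsolutions H Ω) := by
  rintro u ⟨⟨L, hL⟩, hu0, hu⟩ w ⟨⟨L', hL'⟩, hw0, hw⟩
  refine ⟨⟨max L L', ?_⟩, by simp [hu0, hw0], hu.sup hw⟩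
  rw [lipschitzOnWith_iff_restrict] at hL hL' ⊢
  exact hL.max hL'

lemma ViscSub.sub_le_of_speed_le (hv : ViscSub H Ω u) (hΩ : IsOpen Ω) (hu : ContinuousOn u Ω)
    (hC : ∀ z ∈ Ω, ∀ p, H z p ≤ 0 → ‖p‖ ≤ C) {γ γ' : ℝ → Eu n}
    (hγ : ∀ s, HasDerivAt γ (γ' s) s) (ht : 0 ≤ t) (hγΩ : MapsTo γ (Icc 0 t) Ω)
    (hB : ∀ s ∈ Icc 0 t, ‖γ' s‖ ≤ B) : u (γ t) - u (γ 0) ≤ C * B * t :=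
  hv.sub_le_of_curve hΩ subset_rfl hu hγ ht hγΩ fun s hs z hz p hp =>
    (real_inner_le_norm _ _).trans <|
      mul_le_mul (hC z hz p hp) (hB s hs) (norm_nonneg _) ((norm_nonneg _).trans (hC z hz p hp))

lemma ViscSub.sub_le_of_convex (hv : ViscSub H Ω u) (hΩ : IsOpen Ω) (hu : ContinuousOn u Ω)
    (hC : ∀ z ∈ Ω, ∀ p, H z p ≤ 0 → ‖p‖ ≤ C) (hs : Convex ℝ s) (hsΩ : s ⊆ Ω)
    (hy : y ∈ s) (hz : z ∈ s) : u z - u y ≤ C * dist z y := by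
  have h := hv.sub_le_of_speed_le hΩ hu hC (γ := AffineMap.lineMap y z) (γ' := fun _ => z - y)
    (fun s => AffineMap.hasDerivAt_lineMap) zero_le_one
    (fun s hs' => hsΩ (hs.lineMap_mem hy hz hs')) (fun _ _ => le_rfl)
  simpa [dist_eq_norm] using h

lemma InwardFlow.abs_sub_le_of_viscSub (hX : InwardFlow Ω b K X) (hv : ViscSub H Ω u)
    (hu : ContinuousOn u (closure Ω)) (hC : ∀ z ∈ Ω, ∀ p, H z p ≤ 0 → ‖p‖ ≤ C)
    (hB : ∀ x ∈ closure Ω, ‖b x‖ ≤ B) (ht : 0 ≤ t) (hx : x ∈ closure Ω) :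
    |u (X t x) - u x| ≤ C * B * t := by
  have hcont : ContinuousOn (fun x => |u (X t x) - u x|) (closure Ω) :=
    ((hu.comp (hX.continuous_flowMap ht).continuousOn (hX.mapsTo_closure ht)).sub hu).abs
  refine le_on_closure (fun y hy => ?_) hcont continuousOn_const hx
  have hmem : ∀ s, 0 ≤ s → X s y ∈ Ω := fun s hs => by
    rcases hs.eq_or_lt with rfl | hs
    · rwa [hX.isFlow.map_zero]
    · exact hX.mapsTo hs (subset_closure hy)
  have hforward := hv.sub_le_of_speed_le hX.isOpen (hu.mono subset_closure) hC
    (hX.isFlow.hasDerivAt y) ht (fun s hs => hmem s hs.1)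
    fun s hs => hB _ (subset_closure (hmem s hs.1))
  have hbackward := hv.sub_le_of_speed_le hX.isOpen (hu.mono subset_closure) hC
    (fun s => (hX.isFlow.hasDerivAt y (t - s)).comp_const_sub t s) ht
    (fun s hs => hmem _ (sub_nonneg.2 hs.2))
    fun s hs => (norm_neg _).trans_le (hB _ (subset_closure (hmem _ (sub_nonneg.2 hs.2))))
  simp only [sub_self, sub_zero, hX.isFlow.map_zero] at hforward hbackward
  exact abs_sub_le_iff.2 ⟨hforward, hbackward⟩

-- Near `∂Ω` a short segment may leave `Ω`; the flow first carries both endpoints inside.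
lemma InwardFlow.equicontinuousOn_lipSubsolutions (hX : InwardFlow Ω b K X)
    (hC : ∀ z ∈ Ω, ∀ p, H z p ≤ 0 → ‖p‖ ≤ C) :
    EquicontinuousOn (fun u : lipSubsolutions H Ω => (u : Eu n → ℝ)) (closure Ω) := by
  intro x hx
  rw [Metric.uniformity_basis_dist.equicontinuousWithinAt_iff_right]
  intro ε hε
  obtain ⟨B, hB⟩ := hX.exists_norm_le
  obtain ⟨t, ht, htε⟩ := exists_pos_mul_lt (by positivity : 0 < ε / 3) (C * B)
  obtain ⟨d, hd, hdΩ⟩ := hX.exists_closedBall_subset ht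
  obtain ⟨ρ, hρ, hρε⟩ := exists_pos_mul_lt (by positivity : 0 < ε / 3) |C|
  have hnear : ∀ᶠ y in 𝓝 x, dist (X t y) (X t x) < min d ρ :=
    (hX.continuous_flowMap ht.le).continuousAt.eventually_mem
      (ball_mem_nhds _ (lt_min hd hρ))
  filter_upwards [nhdsWithin_le_nhds hnear, self_mem_nhdsWithin] with y hxy hy
  rintro ⟨u, ⟨L, hL⟩, -, hu⟩
  have hseg {z w : Eu n} (hz : z ∈ closedBall (X t x) d) (hw : w ∈ closedBall (X t x) d) :=
    hu.sub_le_of_convex hX.isOpen (hL.continuousOn.mono subset_closure) hC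
      (convex_closedBall (X t x) d) (hdΩ x hx) hz hw
  have hflow {z : Eu n} := hX.abs_sub_le_of_viscSub hu hL.continuousOn hC hB ht.le (x := z)
  have hy' : X t y ∈ closedBall (X t x) d := (hxy.trans_le (min_le_left _ _)).le
  have hx' := mem_closedBall_self (x := X t x) hd.le
  have hsmall : C * dist (X t y) (X t x) < ε / 3 :=
    (mul_le_mul (le_abs_self C) (hxy.trans_le (min_le_right _ _)).le dist_nonneg
      (abs_nonneg C)).trans_lt hρε
  have h₁ := hseg hx' hy'
  have h₂ := hseg hy' hx'
  rw [dist_comm] at h₂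
  have h₃ := abs_le.1 (hflow hx)
  have h₄ := abs_le.1 (hflow hy)
  exact abs_lt.2 ⟨by linarith, by linarith⟩

lemma InwardFlow.bddAbove_lipSubsolutions (hX : InwardFlow Ω b K X)
    (hC : ∀ z ∈ Ω, ∀ p, H z p ≤ 0 → ‖p‖ ≤ C) (hx : x ∈ closure Ω) :
    BddAbove ((fun u => u x) '' lipSubsolutions H Ω) := by
  obtain ⟨B, hB⟩ := hX.exists_norm_le
  have hnear := hX.equicontinuousOn_lipSubsolutions hC 0 (hX.zero_mem_closure hx) _
    (dist_mem_uniformity one_pos)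
  have hlim : Tendsto (fun t => X t x) atTop (𝓝[closure Ω] 0) :=
    tendsto_nhdsWithin_iff.2 ⟨hX.gas.2.2.1 x,
      (eventually_ge_atTop 0).mono fun _ ht => hX.mapsTo_closure ht hx⟩
  obtain ⟨T, hT, hTx⟩ := ((eventually_ge_atTop 0).and (hlim.eventually hnear)).exists
  refine ⟨C * B * T + 1, forall_mem_image.2 fun u hu => ?_⟩
  obtain ⟨⟨L, hL⟩, hu0, hv⟩ := id hu
  have hzero : |u 0 - u (X T x)| < 1 := hTx ⟨u, hu⟩
  rw [hu0] at hzero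
  linarith [(abs_le.1 (hX.abs_sub_le_of_viscSub hv hL.continuousOn hC hB hT hx)).1,
    (abs_lt.1 hzero).1]

lemma InwardFlow.exists_mem_lipSubsolutions_abs_sub_vq_le (hX : InwardFlow Ω b K X)
    {α : Eu n → Matrix (Fin n) (Fin n) ℝ} {θ ε : ℝ} (hθ : 0 < θ)
    (hα : ∀ x ∈ closure Ω, memS θ (α x)) (hε : 0 < ε) :
    ∃ u ∈ lipSubsolutions (Ham α b) Ω, ∀ x ∈ closure Ω, |u x - Vq α b Ω x| ≤ ε := by
  obtain ⟨B, hB⟩ := hX.exists_norm_le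
  have hC : ∀ z ∈ Ω, ∀ p, Ham α b z p ≤ 0 → ‖p‖ ≤ B / θ := fun z hz p hp =>
    (norm_le_of_ham_nonpos (hα z (subset_closure hz)) hθ hp).trans
      (by gcongr; exact hB z (subset_closure hz))
  have hne : (lipSubsolutions (Ham α b) Ω).Nonempty :=
    ⟨0, zero_mem_lipSubsolutions hX.isOpen fun x _ => by simp [Ham, mquad, dotp]⟩
  have hbdd {x : Eu n} := hX.bddAbove_lipSubsolutions hC (x := x)
  obtain ⟨u, hu, huV⟩ := exists_mem_forall_sSup_sub_le_of_supClosed supClosed_lipSubsolutions hne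
    hX.isCompact_closure (fun x => hbdd) (hX.equicontinuousOn_lipSubsolutions hC) hε
  refine ⟨u, hu, fun x hx => ?_⟩
  rw [vq_eq_sSup_image, abs_le]
  constructor <;> linarith [huV x hx, le_csSup (hbdd hx) (mem_image_of_mem _ hu)]

lemma ViscSub.congr {w : Eu n → ℝ} (hu : ViscSub H Ω u) (huw : EqOn u w Ω) : ViscSub H Ω w := by
  refine fun φ hφ x hx hmax => hu φ hφ x hx ?_
  have heq : (fun y => w y - φ y) =ᶠ[𝓝[Ω] x] fun y => u y - φ y :=
    eventually_nhdsWithin_of_forall fun y hy => by simp only [huw hy]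
  exact hmax.congr heq hx

lemma InwardFlow.exists_lipschitzWith_viscSub_abs_sub_vq_le (hX : InwardFlow Ω b K X)
    {α : Eu n → Matrix (Fin n) (Fin n) ℝ} {θ ε : ℝ} (hθ : 0 < θ)
    (hα : ∀ x ∈ closure Ω, memS θ (α x)) (hε : 0 < ε) :
    ∃ U : Eu n → ℝ, (∃ L, LipschitzWith L U) ∧ ViscSub (Ham α b) Ω U ∧
      ∀ x ∈ closure Ω, |U x - Vq α b Ω x| ≤ ε := by
  obtain ⟨u, ⟨⟨L, hL⟩, -, hu⟩, huV⟩ := hX.exists_mem_lipSubsolutions_abs_sub_vq_le hθ hα hε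
  obtain ⟨U, hU, huU⟩ := hL.extend_real
  exact ⟨U, ⟨L, hU⟩, hu.congr (huU.mono subset_closure), fun x hx => huU hx ▸ huV x hx⟩

lemma InwardFlow.exists_abs_vq_le (hX : InwardFlow Ω b K X)
    {α : Eu n → Matrix (Fin n) (Fin n) ℝ} {θ : ℝ} (hθ : 0 < θ)
    (hα : ∀ x ∈ closure Ω, memS θ (α x)) : ∃ M, ∀ x ∈ closure Ω, |Vq α b Ω x| ≤ M := by
  obtain ⟨U, ⟨L, hL⟩, -, hUV⟩ := hX.exists_lipschitzWith_viscSub_abs_sub_vq_le hθ hα one_pos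
  obtain ⟨M, hM⟩ := hX.isCompact_closure.exists_bound_of_continuousOn hL.continuous.continuousOn
  refine ⟨M + 1, fun x hx => ?_⟩
  have hU : |U x| ≤ M := hM x hx
  linarith [abs_sub_abs_le_abs_sub (Vq α b Ω x) (U x), abs_sub_comm (U x) (Vq α b Ω x), hUV x hx]

end Subsolutions

section DualSubsolutions

open scoped NNReal ContDiff

lemma eventually_mul_lt {c : ℝ} (a : ℝ) (hc : 0 < c) : ∀ᶠ t in 𝓝[>] (0 : ℝ), a * t < c :=
  nhdsWithin_le_nhds <|
    (continuous_const_mul a).continuousAt.eventually_lt_const (by simpa using hc)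

variable {Ω : Set (Eu n)} {α : Eu n → Matrix (Fin n) (Fin n) ℝ} {b : Eu n → Eu n} {K : ℝ≥0}
  {X : ℝ → Eu n → Eu n} {w w₁ w₂ : Eu n → ℝ} {x z : Eu n} {R θ ε ε₁ ε₂ r c c₁ c₂ : ℝ}

/-- A derivative-free form of `H_α(x, Dw) ≤ c` on the ball of radius `ε` around `x`, with the
coefficients frozen at `x`. It rests on the Legendre duality
`H_α(x, p) = max_q (p · D_pH_α(x, q) - α(x)q · q)`, whose maximum is attained at `q = p`, so that
momenta `q` up to a Lipschitz constant `R` of `w` suffice. -/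
def IsDualSubsol (α : Eu n → Matrix (Fin n) (Fin n) ℝ) (b : Eu n → Eu n) (R ε : ℝ) (x : Eu n)
    (w : Eu n → ℝ) (c : ℝ) : Prop :=
  ∀ q, ‖q‖ ≤ R → SlopeLE w (closedBall x ε) (hamVel α b x q) (mquad (α x) q + c)

lemma IsDualSubsol.mono (hw : IsDualSubsol α b R ε₁ x w c₁) (hε : ε₂ ≤ ε₁) (hc : c₁ ≤ c₂) :
    IsDualSubsol α b R ε₂ x w c₂ := fun q hq =>
  ((hw q hq).mono_set (closedBall_subset_closedBall hε)).mono (by gcongr)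

lemma IsDualSubsol.convexCombo (h₁ : IsDualSubsol α b R ε x w₁ c₁)
    (h₂ : IsDualSubsol α b R ε x w₂ c₂) {κ : ℝ} (hκ : κ ∈ Icc (0 : ℝ) 1) :
    IsDualSubsol α b R ε x (fun y => (1 - κ) * w₁ y + κ * w₂ y) ((1 - κ) * c₁ + κ * c₂) :=
  fun q hq => (((h₁ q hq).const_mul (sub_nonneg.2 hκ.2)).add ((h₂ q hq).const_mul hκ.1)).mono
    (by linarith)

lemma exists_contDiff_ham_gradient_le (α : Eu n → Matrix (Fin n) (Fin n) ℝ) (b : Eu n → Eu n)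
    {L : ℝ≥0} (hL : LipschitzWith L w) (hε : 0 < ε) :
    ∃ v : Eu n → ℝ, ContDiff ℝ ∞ v ∧ (∀ x, |v x - w x| ≤ L * ε) ∧
      ∀ x c, IsDualSubsol α b L ε x w c → Ham α b x (gradient v x) ≤ c := by
  obtain ⟨v, hv, hvw, hslope⟩ := exists_contDiff_fderiv_le_of_lipschitzWith hL hε
  refine ⟨v, hv, hvw, fun x c hw => ?_⟩
  have hgrad : ‖gradient v x‖ ≤ L := by
    have hself := hslope x (gradient v x) _ (slopeLE_of_lipschitzWith hL)
    rw [← inner_gradient_left, real_inner_self_eq_norm_mul_norm] at hself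
    by_contra! hlt
    exact hself.not_gt (mul_lt_mul_of_pos_right hlt (L.2.trans_lt hlt))
  have hdual := hslope x _ _ (hw _ hgrad)
  rw [← inner_gradient_left, inner_hamVel_self] at hdual
  linarith

lemma ViscSub.slopeLE_hamVel {U : Eu n → ℝ} (hv : ViscSub (Ham α b) Ω U) (hU : Continuous U)
    (hθ : 0 ≤ θ) (hα : memS θ (α x)) {d τ : ℝ} (hd : 0 < d) (hz : ball z d ⊆ Ω)
    (hτ : ∀ y ∈ ball z d, ∀ p, Ham α b y p ≤ 0 → Ham α b x p ≤ τ) (q : Eu n) :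
    SlopeLE U (closedBall z (d / 2)) (hamVel α b x q) (mquad (α x) q + τ) :=
  hv.slopeLE isOpen_ball hz hU.continuousOn (isCompact_closedBall z (d / 2))
    (closedBall_subset_ball (half_lt_self hd)) fun y hy p hp =>
      (inner_hamVel_le hα hθ p q).trans (by linarith [hτ y hy p hp])

-- The flow moves `closure Ω` strictly inside `Ω`, where the slopes of `U` are controlled by the
-- viscosity inequality; both this shift and its derivative are `O(t)` close to the identity.
lemma InwardFlow.eventually_isDualSubsol_comp_flow (hX : InwardFlow Ω b K X) (hθ : 0 < θ)
    (hαc : ContinuousOn α (closure Ω)) (hα : ∀ x ∈ closure Ω, memS θ (α x)) {U : Eu n → ℝ}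
    {L : ℝ≥0} (hL : LipschitzWith L U) (hv : ViscSub (Ham α b) Ω U) (R : ℝ) {τ : ℝ} (hτ : 0 < τ) :
    ∀ᶠ t in 𝓝[>] (0 : ℝ), ∃ ε > 0, ∀ x ∈ closure Ω,
      IsDualSubsol α b R ε x (fun y => U (X t y)) τ := by
  obtain ⟨B, hB⟩ := hX.exists_norm_le
  obtain ⟨δ, hδ, hham⟩ := exists_forall_ham_le hX.isCompact_closure hαc
    hX.lipschitz.continuous.continuousOn hθ hα (half_pos hτ)
  filter_upwards [Ioo_mem_nhdsGT one_pos, eventually_mul_lt B (half_pos hδ),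
    eventually_mul_lt (L * (K * Real.exp K * (B + 2 * (θ⁻¹ * R)))) (half_pos hτ)]
    with t ht htδ htτ
  obtain ⟨d, hd, hdΩ⟩ := hX.exists_closedBall_subset ht.1
  have hd' : 0 < min d (δ / 2) := lt_min hd (half_pos hδ)
  refine ⟨min d (δ / 2) / 2 / Real.exp K, by positivity, fun x hx q hq => ?_⟩
  have hball : ball (X t x) (min d (δ / 2)) ⊆ Ω :=
    (ball_subset_closedBall.trans (closedBall_subset_closedBall (min_le_left _ _))).trans (hdΩ x hx)
  have hmove : dist (X t x) x ≤ B * t := by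
    rw [dist_eq_norm]
    exact hX.isFlow.norm_sub_le ht.1.le fun s hs => hB _ (hX.mapsTo_closure hs.1 hx)
  have hslope := hv.slopeLE_hamVel hL.continuous hθ.le (hα x hx) hd' hball (fun y hy =>
    hham x hx y (subset_closure (hball hy)) <| by
      linarith [dist_triangle_left x y (X t x), mem_ball'.1 hy, min_le_right d (δ / 2)]) q
  have hmaps : MapsTo (X t) (closedBall x (min d (δ / 2) / 2 / Real.exp K))
      (closedBall (X t x) (min d (δ / 2) / 2)) := fun y hy => by
    have hdist := hX.isFlow.dist_le_of_le hX.lipschitz ht.1.le ht.2.le y x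
    rw [mem_closedBall, le_div_iff₀' (Real.exp_pos _)] at hy
    exact hdist.trans (by simpa using hy)
  have hvel : ‖hamVel α b x q‖ ≤ B + 2 * (θ⁻¹ * R) :=
    (norm_hamVel_le (hα x hx) hθ.le q).trans (by gcongr; exact hB x hx)
  have herr : L * (K * Real.exp K * ‖hamVel α b x q‖ * t) ≤ τ / 2 :=
    calc L * (K * Real.exp K * ‖hamVel α b x q‖ * t)
        ≤ L * (K * Real.exp K * (B + 2 * (θ⁻¹ * R)) * t) := by gcongr; exact ht.1.le
      _ ≤ τ / 2 := by linarith
  exact (hslope.comp_flow hL hX.isFlow hX.lipschitz ⟨ht.1.le, ht.2.le⟩ hmaps).mono (by linarith)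

lemma InwardFlow.exists_isDualSubsol_near_vq (hX : InwardFlow Ω b K X) (hθ : 0 < θ)
    (hαc : ContinuousOn α (closure Ω)) (hα : ∀ x ∈ closure Ω, memS θ (α x)) (hr : 0 < r) :
    ∃ L : ℝ≥0, ∀ R, ∀ τ > 0, ∃ w : Eu n → ℝ, LipschitzWith L w ∧
      (∀ x ∈ closure Ω, |w x - Vq α b Ω x| ≤ r) ∧
      ∃ ε > 0, ∀ x ∈ closure Ω, IsDualSubsol α b R ε x w τ := by
  obtain ⟨B, hB⟩ := hX.exists_norm_le
  obtain ⟨U, ⟨L, hL⟩, hv, hUV⟩ :=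
    hX.exists_lipschitzWith_viscSub_abs_sub_vq_le hθ hα (half_pos hr)
  refine ⟨L * (Real.exp (K * 1)).toNNReal, fun R τ hτ => ?_⟩
  obtain ⟨t, ⟨hdual, ht⟩, htr⟩ := (((hX.eventually_isDualSubsol_comp_flow hθ hαc hα hL hv R hτ).and
    (Ioo_mem_nhdsGT one_pos)).and (eventually_mul_lt (L * B) (half_pos hr))).exists
  refine ⟨fun y => U (X t y), hL.comp (hX.isFlow.lipschitzWith hX.lipschitz ht.1.le ht.2.le),
    fun x hx => ?_, hdual⟩
  have hshift : |U (X t x) - U x| ≤ L * (B * t) := by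
    refine (hL.dist_le_mul _ _).trans ?_
    rw [dist_eq_norm]
    gcongr
    exact hX.isFlow.norm_sub_le ht.1.le fun s hs => hB _ (hX.mapsTo_closure hs.1 hx)
  linarith [abs_sub_le (U (X t x)) (U x) (Vq α b Ω x), hUV x hx]

lemma isDualSubsol_mul_flowIntegral (hX : IsFlow b X) (hb : LipschitzWith K b) {φ : Eu n → ℝ}
    (hφ : LipschitzWith 1 φ) {T : ℝ} (hT : 0 ≤ T) {L : ℝ≥0}
    (hL : LipschitzWith L (flowIntegral φ X T)) (hx : ∀ t ≥ T, φ (X t x) ≤ 0) {σ δ : ℝ}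
    (hε₀ : 0 ≤ ε) (hσ : 0 < σ) (hε : Real.exp (K * (T + 1)) * ε ≤ σ / 2) (hθ : 0 ≤ θ)
    (hα : memS θ (α x)) (hδ : 0 ≤ δ) (R : ℝ) :
    IsDualSubsol α b R ε x (fun y => δ * flowIntegral φ X T y)
      (δ * (-φ x + (2 + L * K) * σ + θ⁻¹ * L ^ 2 * δ)) := by
  intro q _
  refine (((slopeLE_flowIntegral hX hb hφ hT hL hx hε₀ hσ hε).change_direction
    (e' := hamVel α b x q) hL).const_mul hδ).mono ?_
  rw [hamVel, add_sub_cancel_left, norm_smul, Real.norm_two]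
  linarith [hα.two_mul_mul_norm_le hθ (δ * L) q]

lemma InwardFlow.exists_strict_isDualSubsol (hX : InwardFlow Ω b K X) (hθ : 0 < θ)
    (hα : ∀ x ∈ closure Ω, memS θ (α x)) (hr : 0 < r) :
    ∃ w : Eu n → ℝ, (∃ L, LipschitzWith L w) ∧ ∃ η > 0, ∃ ε > 0, ∀ R,
      (∀ x ∈ closure Ω \ ball 0 r, IsDualSubsol α b R ε x w (-η)) ∧
      ∀ x ∈ closure Ω, IsDualSubsol α b R ε x w η := by
  let φ : Eu n → ℝ := fun x => max 0 (‖x‖ - r / 2)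
  have hφ : LipschitzWith 1 φ := (LipschitzWith.of_dist_le_mul fun x y => by
    simpa [Real.dist_eq, dist_eq_norm] using abs_norm_sub_norm_le x y).const_max 0
  obtain ⟨T, hT, hTr⟩ := hX.exists_forall_norm_lt (half_pos hr)
  obtain ⟨L, hL⟩ := exists_lipschitzWith_flowIntegral hX.isFlow hX.lipschitz hφ hT
  obtain ⟨σ, hσ, hσr⟩ := exists_pos_mul_lt (by positivity : 0 < r / 8) (2 + L * K : ℝ)
  obtain ⟨ε, hε, hεσ⟩ := exists_pos_mul_lt (half_pos hσ) (Real.exp (K * (T + 1)))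
  obtain ⟨δ, hδ, hδr⟩ := exists_pos_mul_lt (by positivity : 0 < r / 8) (θ⁻¹ * (L : ℝ) ^ 2)
  have hdual (R : ℝ) (x) (hx : x ∈ closure Ω) := isDualSubsol_mul_flowIntegral hX.isFlow
    hX.lipschitz hφ hT hL (fun t ht => (max_eq_left (by linarith [hTr x hx t ht])).le) hε.le hσ
    hεσ.le hθ.le (hα x hx) hδ.le R
  refine ⟨fun y => δ * flowIntegral φ X T y, ⟨_, (lipschitzWith_smul δ).comp hL⟩,
    δ * (r / 4), by positivity, ε, hε, fun R => ⟨fun x hx => ?_, fun x hx => ?_⟩⟩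
  · have hxr : r ≤ ‖x‖ := by simpa using hx.2
    refine (hdual R x hx.1).mono le_rfl ?_
    rw [← mul_neg]
    gcongr
    linarith [le_max_right 0 (‖x‖ - r / 2)]
  · refine (hdual R x hx).mono le_rfl ?_
    gcongr
    linarith [le_max_left 0 (‖x‖ - r / 2)]

lemma lipschitzWith_convexCombo {L₁ L₂ : ℝ≥0} (h₁ : LipschitzWith L₁ w₁)
    (h₂ : LipschitzWith L₂ w₂) {κ : ℝ} (hκ : κ ∈ Icc (0 : ℝ) 1) :
    LipschitzWith (max L₁ L₂) (fun y => (1 - κ) * w₁ y + κ * w₂ y) := by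
  refine (((lipschitzWith_smul (1 - κ)).comp h₁).add ((lipschitzWith_smul κ).comp h₂)).weaken ?_
  rw [← NNReal.coe_le_coe]
  push_cast
  rw [Real.norm_of_nonneg hκ.1, Real.norm_of_nonneg (sub_nonneg.2 hκ.2)]
  calc (1 - κ) * L₁ + κ * L₂ ≤ (1 - κ) * max L₁ L₂ + κ * max L₁ L₂ :=
        add_le_add (mul_le_mul_of_nonneg_left (le_max_left _ _) (sub_nonneg.2 hκ.2))
          (mul_le_mul_of_nonneg_left (le_max_right _ _) hκ.1)
    _ = max L₁ L₂ := by ring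

lemma InwardFlow.exists_strict_isDualSubsol_near_vq (hX : InwardFlow Ω b K X) (hθ : 0 < θ)
    (hαc : ContinuousOn α (closure Ω)) (hα : ∀ x ∈ closure Ω, memS θ (α x)) (hr : 0 < r) :
    ∃ w : Eu n → ℝ, ∃ L : ℝ≥0, LipschitzWith L w ∧
      (∀ x ∈ closure Ω, |w x - Vq α b Ω x| ≤ r) ∧ ∃ η ∈ Ioo (0 : ℝ) 1, ∃ ε > 0,
        (∀ x ∈ closure Ω \ ball 0 r, IsDualSubsol α b L ε x w (-η)) ∧
        ∀ x ∈ closure Ω, IsDualSubsol α b L ε x w 1 := by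
  obtain ⟨L₁, hnear⟩ := hX.exists_isDualSubsol_near_vq hθ hαc hα (half_pos hr)
  obtain ⟨w₂, ⟨L₂, hL₂⟩, η, hη, ε₂, hε₂, hstrict⟩ := hX.exists_strict_isDualSubsol hθ hα hr
  obtain ⟨M, hM⟩ := hX.exists_abs_vq_le hθ hα
  obtain ⟨M₂, hM₂⟩ := hX.isCompact_closure.exists_bound_of_continuousOn
    hL₂.continuous.continuousOn
  obtain ⟨κ, ⟨hκη, hκM⟩, hκ⟩ := (((eventually_mul_lt η (by norm_num : (0 : ℝ) < 1 / 2)).and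
    (eventually_mul_lt (M₂ + M) (half_pos hr))).and (Ioo_mem_nhdsGT one_pos)).exists
  have hκη₀ : 0 < η * κ := mul_pos hη hκ.1
  have hκ' : κ ∈ Icc (0 : ℝ) 1 := Ioo_subset_Icc_self hκ
  obtain ⟨w₁, hL₁, hw₁, ε₁, hε₁, hdual₁⟩ := hnear (max L₁ L₂ : ℝ≥0) (η * κ / 2) (half_pos hκη₀)
  have hdual (x c c') (hx : x ∈ closure Ω) (h₂ : IsDualSubsol α b (max L₁ L₂ : ℝ≥0) ε₂ x w₂ c)
      (hc : (1 - κ) * (η * κ / 2) + κ * c ≤ c') :=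
    (((hdual₁ x hx).mono (min_le_left _ ε₂) le_rfl).convexCombo
      (h₂.mono (min_le_right ε₁ _) le_rfl) hκ').mono le_rfl hc
  refine ⟨_, _, lipschitzWith_convexCombo hL₁ hL₂ hκ', fun x hx => ?_, η * κ / 2,
    ⟨half_pos hκη₀, by linarith⟩, min ε₁ ε₂, lt_min hε₁ hε₂,
    fun x hx => hdual x _ _ hx.1 ((hstrict _).1 x hx) (by nlinarith),
    fun x hx => hdual x _ _ hx ((hstrict _).2 x hx) (by nlinarith)⟩
  calc |(1 - κ) * w₁ x + κ * w₂ x - Vq α b Ω x|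
      = |(1 - κ) * (w₁ x - Vq α b Ω x) + κ * (w₂ x - Vq α b Ω x)| := by ring_nf
    _ ≤ (1 - κ) * |w₁ x - Vq α b Ω x| + κ * |w₂ x - Vq α b Ω x| := by
      refine (abs_add_le _ _).trans_eq ?_
      rw [abs_mul, abs_mul, abs_of_pos hκ.1, abs_of_pos (sub_pos.2 hκ.2)]
    _ ≤ 1 * (r / 2) + κ * (M₂ + M) := by
      gcongr
      · linarith [hκ.1]
      · exact hw₁ x hx
      · exact hκ.1.le
      · exact (abs_sub _ _).trans (add_le_add (hM₂ x hx) (hM x hx))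
    _ ≤ r := by linarith

end DualSubsolutions

open scoped NNReal ContDiff in
theorem stmt14_general {Ω : Set (Eu n)} {ν b : Eu n → Eu n} {K : ℝ≥0} {X : ℝ → Eu n → Eu n}
    {α : Eu n → Matrix (Fin n) (Fin n) ℝ} {θ r : ℝ} (hΩ : IsBdC1With Ω ν)
    (hb : LipschitzWith K b) (hX : GAS b X) (hν : ∀ x ∈ frontier Ω, dotp (b x) (ν x) < 0)
    (hθ : 0 < θ) (hαc : ContinuousOn α (closure Ω)) (hα : ∀ x ∈ closure Ω, memS θ (α x))
    (hr : 0 < r) :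
    ∃ v : Eu n → ℝ, ∃ η ∈ Ioo (0 : ℝ) 1, ContDiff ℝ ∞ v ∧
      (∀ x ∈ closure Ω \ ball 0 r, Ham α b x (gradient v x) ≤ -η) ∧
      (∀ x ∈ closure Ω, Ham α b x (gradient v x) ≤ 1) ∧
      ∀ x ∈ closure Ω, |v x - Vq α b Ω x| < r := by
  have hflow : InwardFlow Ω b K X := .of_isBdC1With hΩ hb hX hν
  obtain ⟨w, L, hL, hwV, η, hη, ε, hε, hout, hin⟩ :=
    hflow.exists_strict_isDualSubsol_near_vq hθ hαc hα (half_pos hr)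
  obtain ⟨d, hd, hdr⟩ := exists_pos_mul_lt (half_pos hr) (L : ℝ)
  obtain ⟨v, hv, hvw, hham⟩ := exists_contDiff_ham_gradient_le α b hL (lt_min hε hd)
  refine ⟨v, η, hη, hv, fun x hx => hham x _ ((hout x ?_).mono (min_le_left _ _) le_rfl),
    fun x hx => hham x _ ((hin x hx).mono (min_le_left _ _) le_rfl), fun x hx => ?_⟩
  · exact ⟨hx.1, fun h => hx.2 (ball_subset_ball (half_le_self hr.le) h)⟩
  · have hmoll : |v x - w x| < r / 2 :=
      (hvw x).trans_lt (lt_of_le_of_lt (by gcongr; exact min_le_right _ _) hdr)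
    linarith [abs_sub_le (v x) (w x) (Vq α b Ω x), hwV x hx]

/-- Lemma 4.3: smooth approximation `v_r` of the quasi-potential `V_α`. -/
theorem stmt14 {n : ℕ} (S : SettingB n) (α : Eu n → Matrix (Fin n) (Fin n) ℝ)
    (hαc : ContinuousOn α (closure S.Ω)) (hαm : ∀ x ∈ closure S.Ω, memS S.θ₀ (α x))
    (r : ℝ) (hr : r ∈ Set.Ioo 0 S.r₀) :
    ∃ v : Eu n → ℝ, ∃ η ∈ Set.Ioo (0:ℝ) 1,
      ContDiffOn ℝ 2 v (closure S.Ω) ∧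
      (∀ x ∈ S.Ω \ ball (0 : Eu n) r, Ham α S.b x (gradient v x) ≤ -η) ∧
      (∀ x ∈ ball (0 : Eu n) r, Ham α S.b x (gradient v x) ≤ 1) ∧
      (∀ x ∈ closure S.Ω, |v x - Vq α S.b S.Ω x| < r) := by
  obtain ⟨K, hb⟩ := S.b_lip
  obtain ⟨X, hX⟩ := S.b_gas
  have hball : ball 0 r ⊆ closure S.Ω :=
    (ball_subset_closedBall.trans (closedBall_subset_closedBall hr.2.le)).trans
      (S.ball_sub.trans subset_closure)
  obtain ⟨v, η, hη, hv, hout, hin, hvV⟩ :=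
    stmt14_general S.domain hb hX S.b_inward S.θ₀_mem.1 hαc hαm hr.1
  exact ⟨v, η, hη, (hv.of_le (by norm_cast)).contDiffOn,
    fun x hx => hout x ⟨subset_closure hx.1, hx.2⟩, fun x hx => hin x (hball hx), hvV⟩
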